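/- arXiv:2412.15782 — 3 statements merged into one kernel-verified Lean document; each statement's English description precedes it below -/
import Mathlib

section
/- Let G = (V, E, x) be a finite connected rooted graph. Then: (i) for every vertex i ∈ V, the map λ ↦ Var^{IV-GFF}_{G,λ}[φ(i)] is decreasing on (0,∞)^E with respect to the coordinatewise partial order on conductances; and (ii) for every pair of vertices i,j ∈ V, the map λ ↦ Var^{IV-GFF}_{G,λ}[φ(i) − φ(j)] is decreasing on (0,∞)^E with respect to the coordinatewise partial order on conductances. -/
open scoped ENNReal

noncomputable section

/-- The graph on `V` whose edges are the pairs of distinct vertices carrying a positive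
conductance. -/
def supportGraph {V : Type*} (c : V → V → ℝ) : SimpleGraph V :=
  SimpleGraph.fromRel (fun a b => 0 < c a b)

/-- Configurations of the integer-valued Gaussian free field on the rooted graph with
conductances `c` and root `x`: integer-valued height functions vanishing at the root and
(by convention) outside the connected component of the root. -/
def GffConfig {V : Type*} (c : V → V → ℝ) (x : V) : Type _ :=
  {φ : V → ℤ // φ x = 0 ∧ ∀ v : V, ¬ (supportGraph c).Reachable x v → φ v = 0}

/-- Boltzmann weight `exp(−∑_{ij∈E} λ_{ij}(φ(i)−φ(j))²)` of a configuration (each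
unordered pair is counted once, whence the factor `1/2` in the ordered sum). -/
def gffWeight {V : Type*} [Fintype V] (c : V → V → ℝ) (φ : V → ℤ) : ℝ :=
  Real.exp (-((1 : ℝ) / 2 * ∑ i : V, ∑ j : V, c i j * ((φ i - φ j : ℤ) : ℝ) ^ 2))

/-- Partition function of the integer-valued Gaussian free field. -/
def gffZ {V : Type*} [Fintype V] (c : V → V → ℝ) (x : V) : ℝ :=
  ∑' φ : GffConfig c x, gffWeight c φ.val

/-- Variance of an observable `f` under the integer-valued Gaussian free field
(real-valued formula, meaningful on the connected component of the root). -/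
def gffRVar {V : Type*} [Fintype V] (c : V → V → ℝ) (x : V) (f : (V → ℤ) → ℝ) : ℝ :=
  (∑' φ : GffConfig c x, f φ.val ^ 2 * gffWeight c φ.val) / gffZ c x
    - ((∑' φ : GffConfig c x, f φ.val * gffWeight c φ.val) / gffZ c x) ^ 2

open scoped Classical in
/-- Variance of the height `φ(i)` under the integer-valued Gaussian free field, set to
`∞` when `i` is not connected to the root. -/
def gffVar1 {V : Type*} [Fintype V] (c : V → V → ℝ) (x : V) (i : V) : ℝ≥0∞ :=
  if (supportGraph c).Reachable x i then
    ENNReal.ofReal (gffRVar c x fun φ => ((φ i : ℤ) : ℝ))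
  else ⊤

open scoped Classical in
/-- Variance of the height difference `φ(i) − φ(j)` under the integer-valued Gaussian
free field, set to `∞` when `i` or `j` is not connected to the root. -/
def gffVar2 {V : Type*} [Fintype V] (c : V → V → ℝ) (x : V) (i j : V) : ℝ≥0∞ :=
  if (supportGraph c).Reachable x i ∧ (supportGraph c).Reachable x j then
    ENNReal.ofReal (gffRVar c x fun φ => ((φ i : ℤ) : ℝ) - ((φ j : ℤ) : ℝ))
  else ⊤

end


section GffAux
open MeasureTheory ProbabilityTheory

lemma aux_summable_pi {V : Type*} [Fintype V] (h : ℤ → ℝ) (h0 : ∀ n, 0 ≤ h n)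
    (hs : Summable h) : Summable (fun φ : V → ℤ => ∏ i, h (φ i)) := by
  classical
  refine summable_of_sum_le (c := ∏ _i : V, ∑' n, h n)
    (fun φ => Finset.prod_nonneg fun i _ => h0 _) (fun s => ?_)
  have hsub : s ⊆ Fintype.piFinset (fun i : V => s.image (fun φ => φ i)) := by
    intro φ hφ
    rw [Fintype.mem_piFinset]
    intro i
    exact Finset.mem_image_of_mem _ hφ
  calc ∑ φ ∈ s, ∏ i, h (φ i)
      ≤ ∑ φ ∈ Fintype.piFinset (fun i : V => s.image (fun φ => φ i)), ∏ i, h (φ i) :=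
        Finset.sum_le_sum_of_subset_of_nonneg hsub
          (fun φ _ _ => Finset.prod_nonneg fun i _ => h0 _)
    _ = ∏ i : V, ∑ n ∈ s.image (fun φ => φ i), h n := by
        rw [Finset.prod_univ_sum]
    _ ≤ ∏ _i : V, ∑' n, h n :=
        Finset.prod_le_prod (fun i _ => Finset.sum_nonneg fun n _ => h0 n)
          (fun i _ => hs.sum_le_tsum _ (fun n _ => h0 n))

lemma aux_summable_exp_int (ε : ℝ) (hε : 0 < ε) :
    Summable (fun n : ℤ => Real.exp (-(ε * (n : ℝ) ^ 2))) := by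
  have hnat : Summable (fun n : ℕ => Real.exp (-(ε * (n : ℝ) ^ 2))) := by
    have h1 : Summable (fun n : ℕ => Real.exp ((n : ℝ) * (-ε))) :=
      Real.summable_exp_nat_mul_iff.mpr (by linarith)
    refine Summable.of_nonneg_of_le (fun n => (Real.exp_pos _).le) (fun n => ?_) h1
    apply Real.exp_le_exp.mpr
    have : (n : ℝ) ≤ (n : ℝ) ^ 2 := by
      exact_mod_cast Nat.le_self_pow (by norm_num) n
    nlinarith
  refine Summable.of_nat_of_neg ?_ ?_
  · simpa using hnat
  · simpa using hnat

set_option maxHeartbeats 2000000 in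
/-- summation over pairs is nonnegative -/
lemma aux_pair_nonneg {L : Type*} [AddCommGroup L] (h2 : ∀ u : L, u + u = 0 → u = 0)
    (F : L → ℝ) (hF : Summable F) :
    0 ≤ ∑' p : L × L, F (p.1 + p.2) * F (p.1 - p.2) := by
  classical
  have hFn : Summable (fun u => ‖F u‖) := hF.norm
  have hprod : Summable (fun p : L × L => F p.1 * F p.2) := summable_mul_of_summable_norm hFn hFn
  -- change of variables
  let e : L × L ≃ L × L :=
    { toFun := fun p => (p.1 + p.2, p.2)
      invFun := fun p => (p.1 - p.2, p.2)
      left_inv := fun p => by simp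
      right_inv := fun p => by simp }
  have hinj : Function.Injective (fun p : L × L => (p.1, p.1 + (p.2 + p.2))) := by
    rintro ⟨a, b⟩ ⟨a', b'⟩ h
    simp only [Prod.mk.injEq] at h
    obtain ⟨rfl, h⟩ := h
    have h3 : b + b = b' + b' := add_left_cancel h
    have : (b - b') + (b - b') = 0 := by
      have : (b - b') + (b - b') = (b + b) - (b' + b') := by abel
      rw [this, h3, sub_self]
    have := sub_eq_zero.mp (h2 _ this)
    rw [this]
  have hinjr : ∀ r : L, Function.Injective (fun k : L => r + (k + k)) := by
    intro r b b' h
    have := @hinj (r, b) (r, b') (by simpa using h)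
    simpa using this
  have hsum2 : Summable (fun p : L × L => F p.1 * F (p.1 + (p.2 + p.2))) :=
    hprod.comp_injective hinj
  have hstep1 : ∑' p : L × L, F (p.1 + p.2) * F (p.1 - p.2)
      = ∑' p : L × L, F p.1 * F (p.1 + (p.2 + p.2)) := by
    rw [← e.tsum_eq]
    refine tsum_congr fun p => ?_
    simp only [e, Equiv.coe_fn_mk, add_sub_cancel_right]
    rw [mul_comm, add_assoc]
  let H : L → ℝ := fun v => ∑' k, F (v + (k + k))
  have hstep2 : ∑' p : L × L, F p.1 * F (p.1 + (p.2 + p.2)) = ∑' v, F v * H v := by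
    rw [hsum2.tsum_prod]
    refine tsum_congr fun v => ?_
    show ∑' k, F v * F (v + (k + k)) = F v * ∑' k, F (v + (k + k))
    rw [tsum_mul_left]
  have hsumFH : Summable (fun v => F v * H v) := by
    have := hsum2.prod
    refine this.congr fun v => ?_
    show ∑' k, F v * F (v + (k + k)) = F v * ∑' k, F (v + (k + k))
    rw [tsum_mul_left]
  let D : AddSubgroup L := (AddMonoidHom.id L + AddMonoidHom.id L).range
  have hD : ∀ u, u ∈ D ↔ ∃ k, k + k = u := by
    intro u; simp [D, AddMonoidHom.mem_range]
  let π : L → L ⧸ D := fun v => (v : L ⧸ D)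
  rw [hstep1, hstep2, ← (Equiv.sigmaFiberEquiv π).tsum_eq]
  have hs3 : Summable (fun x : Σ q, {v // π v = q} => F (Equiv.sigmaFiberEquiv π x) *
      H (Equiv.sigmaFiberEquiv π x)) := (Equiv.sigmaFiberEquiv π).summable_iff.mpr hsumFH
  rw [hs3.tsum_sigma]
  refine tsum_nonneg fun q => ?_
  obtain ⟨r, rfl⟩ := QuotientAddGroup.mk_surjective q
  have hmem : ∀ v, π v = (r : L ⧸ D) ↔ ∃ k, r + (k + k) = v := by
    intro v
    simp only [π]
    rw [eq_comm, QuotientAddGroup.eq, hD]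
    constructor
    · rintro ⟨k, hk⟩; exact ⟨k, by rw [hk]; abel⟩
    · rintro ⟨k, hk⟩; exact ⟨k, by rw [← hk]; abel⟩
  let e2 : L ≃ {v // π v = (r : L ⧸ D)} := Equiv.ofBijective
    (fun k => ⟨r + (k + k), (hmem _).mpr ⟨k, rfl⟩⟩) (by
      constructor
      · intro a b h
        exact hinjr r (by simpa using congrArg Subtype.val h)
      · rintro ⟨v, hv⟩
        obtain ⟨k, hk⟩ := (hmem v).mp hv
        exact ⟨k, Subtype.ext hk⟩)
  have hHr : ∀ k, H (r + (k + k)) = H r := by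
    intro k
    simp only [H]
    rw [← (Equiv.addLeft k).tsum_eq (fun j => F (r + (j + j)))]
    refine tsum_congr fun j => ?_
    congr 1
    simp only [Equiv.coe_addLeft]
    abel
  have : ∑' (c : {v // π v = (r : L ⧸ D)}), F (Equiv.sigmaFiberEquiv π ⟨_, c⟩) *
      H (Equiv.sigmaFiberEquiv π ⟨_, c⟩) = H r * H r := by
    rw [← e2.tsum_eq]
    have : ∀ k, F (Equiv.sigmaFiberEquiv π ⟨_, e2 k⟩) * H (Equiv.sigmaFiberEquiv π ⟨_, e2 k⟩)
        = F (r + (k + k)) * H r := by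
      intro k
      rw [← hHr k]; rfl
    rw [tsum_congr this, tsum_mul_right]
  have h4 := mul_self_nonneg (H r)
  rw [← this] at h4
  exact h4

lemma aux_cos {L : Type*} [AddCommGroup L] (h2 : ∀ u : L, u + u = 0 → u = 0)
    (A : L → ℝ) (hA : ∀ u v, A (u + v) + A (u - v) = 2 * A u + 2 * A v)
    (f g : L →+ ℝ) (s1 : Summable fun u => Real.exp (-A u))
    (s2 : Summable fun u => f u ^ 2 * Real.exp (-A u))
    (s3 : Summable fun u => f u * Real.exp (-(A u / 2))) (t : ℝ) :
    (∑' u, f u ^ 2 * Real.exp (-A u) * Real.cos (t * g u)) * (∑' u, Real.exp (-A u)) ≤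
    (∑' u, f u ^ 2 * Real.exp (-A u)) * (∑' u, Real.exp (-A u) * Real.cos (t * g u)) := by
  have bnd : ∀ (a : L → ℝ) (b : L → ℝ), Summable a → (∀ u, |b u| ≤ 1) →
      Summable (fun u => a u * b u) := by
    intro a b ha hb
    refine Summable.of_norm_bounded ha.norm (fun u => ?_)
    rw [norm_mul]
    exact mul_le_of_le_one_right (norm_nonneg _) (hb u)
  have c1 := bnd _ (fun u => Real.cos (t * g u)) s1 (fun u => Real.abs_cos_le_one _)
  have c2 := bnd _ (fun u => Real.cos (t * g u)) s2 (fun u => Real.abs_cos_le_one _)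
  have c3 := bnd _ (fun u => Real.sin (t * g u / 2)) s3 (fun u => Real.abs_sin_le_one _)
  have key := aux_pair_nonneg h2 _ c3
  have m12 := summable_mul_of_summable_norm s2.norm c1.norm
  have m21 := summable_mul_of_summable_norm c1.norm s2.norm
  have n12 := summable_mul_of_summable_norm c2.norm s1.norm
  have n21 := summable_mul_of_summable_norm s1.norm c2.norm
  have e : ∀ p : L × L, (f (p.1 + p.2) * Real.exp (-(A (p.1 + p.2) / 2)) *
        Real.sin (t * g (p.1 + p.2) / 2)) * (f (p.1 - p.2) * Real.exp (-(A (p.1 - p.2) / 2)) *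
        Real.sin (t * g (p.1 - p.2) / 2)) = 
      1 / 2 * (((f p.1 ^ 2 * Real.exp (-A p.1)) * (Real.exp (-A p.2) * Real.cos (t * g p.2))
        + (Real.exp (-A p.1) * Real.cos (t * g p.1)) * (f p.2 ^ 2 * Real.exp (-A p.2)))
      - ((f p.1 ^ 2 * Real.exp (-A p.1) * Real.cos (t * g p.1)) * Real.exp (-A p.2)
        + Real.exp (-A p.1) * (f p.2 ^ 2 * Real.exp (-A p.2) * Real.cos (t * g p.2)))) := by
    rintro ⟨u, v⟩
    simp only
    have he : Real.exp (-(A (u + v) / 2)) * Real.exp (-(A (u - v) / 2))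
        = Real.exp (-A u) * Real.exp (-A v) := by
      rw [← Real.exp_add, ← Real.exp_add]
      congr 1
      linarith [hA u v]
    have hc : Real.cos (t * g v) - Real.cos (t * g u) =
        2 * (Real.sin (t * g (u + v) / 2) * Real.sin (t * g (u - v) / 2)) := by
      rw [Real.cos_sub_cos, map_add, map_sub]
      rw [show (t * g v - t * g u) / 2 = -(t * (g u - g v) / 2) by ring, Real.sin_neg,
        show (t * g v + t * g u) / 2 = t * (g u + g v) / 2 by ring]
      ring
    rw [map_add f, map_sub f]
    linear_combination (f u + f v) * (f u - f v) * Real.sin (t * g (u + v) / 2) *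
      Real.sin (t * g (u - v) / 2) * he - (f u + f v) * (f u - f v) *
      Real.exp (-A u) * Real.exp (-A v) / 2 * hc
  rw [tsum_congr e, tsum_mul_left, Summable.tsum_sub (m12.add m21) (n12.add n21),
    Summable.tsum_add m12 m21, Summable.tsum_add n12 n21,
    ← tsum_mul_tsum_of_summable_norm s2.norm c1.norm,
    ← tsum_mul_tsum_of_summable_norm c1.norm s2.norm,
    ← tsum_mul_tsum_of_summable_norm c2.norm s1.norm,
    ← tsum_mul_tsum_of_summable_norm s1.norm c2.norm] at key
  linarith

lemma aux_gauss_cos (d : ℝ) (hd : 0 ≤ d) (y : ℝ) :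
    ∫ t, Real.cos (t * y) ∂(gaussianReal 0 (2 * d).toNNReal) = Real.exp (-(d * y ^ 2)) := by
  have h := charFun_gaussianReal (μ := 0) (v := (2 * d).toNNReal) y
  rw [charFun_apply_real] at h
  have h2 := congrArg Complex.re h
  have hint : Integrable (fun t : ℝ => Complex.exp (y * t * Complex.I))
      (gaussianReal 0 (2 * d).toNNReal) := by
    refine Integrable.of_bound (C := 1) (by fun_prop) (Filter.Eventually.of_forall fun t => ?_)
    rw [← Complex.ofReal_mul, Complex.norm_exp_ofReal_mul_I]
  have h3 := integral_re hint
  simp only [RCLike.re_eq_complex_re] at h3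
  rw [← h3] at h2
  have h4 : ∀ t : ℝ, (Complex.exp (y * t * Complex.I)).re = Real.cos (t * y) := by
    intro t
    rw [← Complex.ofReal_mul, Complex.exp_ofReal_mul_I_re, mul_comm]
  simp only [h4] at h2
  rw [h2]
  have : ((y : ℂ) * (0 : ℝ) * Complex.I - ((2 * d).toNNReal : ℝ) * (y : ℂ) ^ 2 / 2)
      = ((-(d * y ^ 2) : ℝ) : ℂ) := by
    rw [Real.coe_toNNReal _ (by linarith)]
    push_cast
    ring
  rw [this, Complex.exp_ofReal_re]

lemma aux_int_tsum {L : Type*} [Countable L] (a : L → ℝ) (g : L → ℝ) (ha : Summable a)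
    (d : ℝ) (hd : 0 ≤ d) :
    Integrable (fun t => ∑' u, a u * Real.cos (t * g u)) (gaussianReal 0 (2 * d).toNNReal) ∧
    ∫ t, ∑' u, a u * Real.cos (t * g u) ∂(gaussianReal 0 (2 * d).toNNReal) =
      ∑' u, a u * Real.exp (-(d * g u ^ 2)) := by
  have hle : ∀ u t, ‖a u * Real.cos (t * g u)‖ ≤ ‖a u‖ := by
    intro u t
    rw [norm_mul]
    exact mul_le_of_le_one_right (norm_nonneg _) (Real.abs_cos_le_one _)
  have hi : ∀ u, Integrable (fun t => a u * Real.cos (t * g u))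
      (gaussianReal 0 (2 * d).toNNReal) := fun u =>
    Integrable.of_bound (C := ‖a u‖) (by fun_prop) (Filter.Eventually.of_forall fun t => hle u t)
  constructor
  · have hcont : Continuous (fun t => ∑' u, a u * Real.cos (t * g u)) :=
      continuous_tsum (fun u => by fun_prop) ha.norm (fun u t => hle u t)
    refine Integrable.of_bound (C := ∑' u, ‖a u‖) hcont.aestronglyMeasurable
      (Filter.Eventually.of_forall fun t => ?_)
    exact tsum_of_norm_bounded ha.norm.hasSum (fun u => hle u t)
  · rw [← integral_tsum_of_summable_integral_norm hi]
    · refine tsum_congr fun u => ?_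
      rw [integral_const_mul, aux_gauss_cos d hd]
    · refine Summable.of_nonneg_of_le (fun u => integral_nonneg fun t => norm_nonneg _)
        (fun u => ?_) ha.norm
      have := integral_mono (hi u).norm (integrable_const ‖a u‖)
        (μ := gaussianReal 0 (2 * d).toNNReal) (fun t => hle u t)
      simpa using this

lemma aux_core {L : Type*} [AddCommGroup L] [Countable L] (h2 : ∀ u : L, u + u = 0 → u = 0)
    (A : L → ℝ) (hA : ∀ u v, A (u + v) + A (u - v) = 2 * A u + 2 * A v)
    (f g : L →+ ℝ) (s1 : Summable fun u => Real.exp (-A u))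
    (s2 : Summable fun u => f u ^ 2 * Real.exp (-A u))
    (s3 : Summable fun u => f u * Real.exp (-(A u / 2))) (d : ℝ) (hd : 0 ≤ d) :
    (∑' u, f u ^ 2 * Real.exp (-A u) * Real.exp (-(d * g u ^ 2))) * (∑' u, Real.exp (-A u)) ≤
    (∑' u, f u ^ 2 * Real.exp (-A u)) * (∑' u, Real.exp (-A u) * Real.exp (-(d * g u ^ 2))) := by
  obtain ⟨i1, j1⟩ := aux_int_tsum _ g s1 d hd
  obtain ⟨i2, j2⟩ := aux_int_tsum _ g s2 d hd
  rw [← j1, ← j2, ← integral_mul_const, ← integral_const_mul]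
  exact integral_mono (i2.mul_const _) (i1.const_mul _)
    (fun t => aux_cos h2 A hA f g s1 s2 s3 t)

end GffAux

section GffAux2

/-- energy -/
noncomputable def auxA {V : Type*} [Fintype V] (c : V → V → ℝ) (φ : V → ℤ) : ℝ :=
  (1 : ℝ) / 2 * ∑ i : V, ∑ j : V, c i j * ((φ i - φ j : ℤ) : ℝ) ^ 2

/-- configurations as a group -/
def auxL {V : Type*} (x : V) : AddSubgroup (V → ℤ) := (Pi.evalAddMonoidHom (fun _ : V => ℤ) x).ker

lemma auxL_mem {V : Type*} (x : V) (φ : V → ℤ) : φ ∈ auxL x ↔ φ x = 0 := by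
  simp [auxL, AddMonoidHom.mem_ker]

lemma auxA_para {V : Type*} [Fintype V] (c : V → V → ℝ) (u v : V → ℤ) :
    auxA c (u + v) + auxA c (u - v) = 2 * auxA c u + 2 * auxA c v := by
  simp only [auxA, Finset.mul_sum, ← Finset.sum_add_distrib]
  refine Finset.sum_congr rfl fun i _ => Finset.sum_congr rfl fun j _ => ?_
  simp only [Pi.add_apply, Pi.sub_apply]
  push_cast
  ring

lemma auxA_mono {V : Type*} [Fintype V] (c c' : V → V → ℝ) (h : ∀ i j, c' i j ≤ c i j)
    (u : V → ℤ) : auxA c' u ≤ auxA c u := by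
  unfold auxA
  gcongr with i _ j _
  exact h i j

lemma auxA_term {V : Type*} [Fintype V] (c : V → V → ℝ) (h : ∀ i j, 0 ≤ c i j)
    (u : V → ℤ) (i j : V) : c i j * ((u i - u j : ℤ) : ℝ) ^ 2 ≤ 2 * auxA c u := by
  have hn : ∀ i j, 0 ≤ c i j * ((u i - u j : ℤ) : ℝ) ^ 2 := fun i j =>
    mul_nonneg (h i j) (sq_nonneg _)
  have h1 := Finset.single_le_sum (f := fun j => c i j * ((u i - u j : ℤ) : ℝ) ^ 2)
    (fun j _ => hn i j) (Finset.mem_univ j)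
  have h2 := Finset.single_le_sum (f := fun i => ∑ j, c i j * ((u i - u j : ℤ) : ℝ) ^ 2)
    (fun i _ => Finset.sum_nonneg fun j _ => hn i j) (Finset.mem_univ i)
  unfold auxA
  linarith

lemma auxA_nonneg {V : Type*} [Fintype V] (c : V → V → ℝ) (h : ∀ i j, 0 ≤ c i j)
    (u : V → ℤ) : 0 ≤ auxA c u :=
  mul_nonneg (by norm_num) (Finset.sum_nonneg fun i _ => Finset.sum_nonneg fun j _ =>
    mul_nonneg (h i j) (sq_nonneg _))

lemma aux_coer {V : Type*} [Fintype V] (c : V → V → ℝ) (h : ∀ i j, 0 ≤ c i j) (x i : V)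
    (hr : (supportGraph c).Reachable x i) :
    ∃ K : ℝ, 0 ≤ K ∧ ∀ u : V → ℤ, u x = 0 → (u i : ℝ) ^ 2 ≤ K * auxA c u := by
  rw [SimpleGraph.reachable_iff_reflTransGen] at hr
  induction hr with
  | refl => exact ⟨0, le_rfl, fun u hu => by simp [hu]⟩
  | @tail a b _ hab ih =>
    obtain ⟨K, hK, ih⟩ := ih
    have hd : ∃ M : ℝ, 0 ≤ M ∧ ∀ u : V → ℤ, ((u a : ℝ) - u b) ^ 2 ≤ M * auxA c u := by
      rw [supportGraph, SimpleGraph.fromRel_adj] at hab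
      rcases hab.2 with hp | hp
      · refine ⟨2 / c a b, by positivity, fun u => ?_⟩
        have := auxA_term c h u a b
        push_cast at this
        rw [div_mul_eq_mul_div, le_div_iff₀ hp]
        linarith
      · refine ⟨2 / c b a, by positivity, fun u => ?_⟩
        have := auxA_term c h u b a
        push_cast at this
        rw [div_mul_eq_mul_div, le_div_iff₀ hp]
        linarith
    obtain ⟨M, hM, hd⟩ := hd
    refine ⟨2 * K + 2 * M, by positivity, fun u hu => ?_⟩
    have h1 := ih u hu
    have h2 := hd u
    nlinarith [sq_nonneg (2 * (u a : ℝ) - u b)]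

lemma aux_sum1 {V : Type*} [Fintype V] (c : V → V → ℝ) (x : V)
    (hc : ∀ i, ∃ K : ℝ, 0 ≤ K ∧ ∀ u : V → ℤ, u x = 0 → (u i : ℝ) ^ 2 ≤ K * auxA c u)
    (δ : ℝ) (hδ : 0 < δ) :
    Summable (fun u : auxL x => Real.exp (-(δ * auxA c u))) := by
  choose K hK hc using hc
  have hS : 0 < 1 + ∑ i, K i := by
    have := Finset.sum_nonneg (s := Finset.univ) fun i _ => hK i
    linarith
  have hp := aux_summable_pi (V := V) _ (fun n => (Real.exp_pos _).le)
    (aux_summable_exp_int (δ / (1 + ∑ i, K i)) (by positivity))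
  have hp2 := hp.comp_injective (Subtype.val_injective (p := fun u => u ∈ auxL x))
  refine Summable.of_nonneg_of_le (fun u => (Real.exp_pos _).le) (fun u => ?_) hp2
  simp only [Function.comp]
  rw [← Real.exp_sum]
  apply Real.exp_le_exp.mpr
  rw [Finset.sum_neg_distrib, ← Finset.mul_sum, neg_le_neg_iff, div_mul_eq_mul_div,
    div_le_iff₀ hS, mul_assoc]
  apply mul_le_mul_of_nonneg_left _ hδ.le
  have hx : (u : V → ℤ) x = 0 := (auxL_mem x _).mp u.2
  have h1 : ∑ i, ((u : V → ℤ) i : ℝ) ^ 2 ≤ (∑ i, K i) * auxA c u := by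
    rw [Finset.sum_mul]
    exact Finset.sum_le_sum fun i _ => hc i _ hx
  have h0 : 0 ≤ auxA c u ∨ auxA c u < 0 := le_or_gt _ _
  rcases h0 with h0 | h0
  · linarith
  · -- all coordinates vanish
    have hz : (u : V → ℤ) = 0 := by
      funext i
      have := hc i _ hx
      have h3 : ((u : V → ℤ) i : ℝ) ^ 2 ≤ 0 := this.trans
        (mul_nonpos_of_nonneg_of_nonpos (hK i) h0.le)
      have := pow_eq_zero_iff (two_ne_zero) |>.mp (le_antisymm h3 (sq_nonneg _))
      exact_mod_cast this
    rw [hz] at h0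
    simp [auxA] at h0

lemma aux_sum2 {V : Type*} [Fintype V] (c : V → V → ℝ) (x : V)
    (hc : ∀ i, ∃ K : ℝ, 0 ≤ K ∧ ∀ u : V → ℤ, u x = 0 → (u i : ℝ) ^ 2 ≤ K * auxA c u)
    (f : auxL x → ℝ) (hf : ∃ K : ℝ, 0 ≤ K ∧ ∀ u : auxL x, f u ^ 2 ≤ K * auxA c u)
    (δ : ℝ) (hδ : 0 < δ) :
    Summable (fun u : auxL x => f u ^ 2 * Real.exp (-(δ * auxA c u))) := by
  obtain ⟨K, hK, hf⟩ := hf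
  refine Summable.of_nonneg_of_le (fun u => by positivity) (fun u => ?_)
    ((aux_sum1 c x hc (δ / 2) (by positivity)).mul_left (2 * K / δ))
  have h1 := Real.add_one_le_exp (δ / 2 * auxA c u)
  have h2 : f u ^ 2 ≤ 2 * K / δ * Real.exp (δ / 2 * auxA c u) := by
    calc f u ^ 2 ≤ K * auxA c u := hf u
      _ = 2 * K / δ * (δ / 2 * auxA c u) := by field_simp
      _ ≤ _ := by
        apply mul_le_mul_of_nonneg_left _ (by positivity)
        linarith
  calc f u ^ 2 * Real.exp (-(δ * auxA c u))
      ≤ 2 * K / δ * Real.exp (δ / 2 * auxA c u) * Real.exp (-(δ * auxA c u)) := by gcongr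
    _ = _ := by
      rw [mul_assoc, ← Real.exp_add]
      congr 2
      ring

lemma aux_sum3 {V : Type*} [Fintype V] (c : V → V → ℝ) (x : V)
    (hc : ∀ i, ∃ K : ℝ, 0 ≤ K ∧ ∀ u : V → ℤ, u x = 0 → (u i : ℝ) ^ 2 ≤ K * auxA c u)
    (f : auxL x → ℝ) (hf : ∃ K : ℝ, 0 ≤ K ∧ ∀ u : auxL x, f u ^ 2 ≤ K * auxA c u)
    (δ : ℝ) (hδ : 0 < δ) :
    Summable (fun u : auxL x => f u * Real.exp (-(δ * auxA c u))) := by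
  refine Summable.of_norm_bounded ((aux_sum1 c x hc δ hδ).add (aux_sum2 c x hc f hf δ hδ))
    (fun u => ?_)
  rw [norm_mul, Real.norm_eq_abs, Real.norm_eq_abs, Real.abs_exp]
  have : |f u| ≤ 1 + f u ^ 2 := by
    rw [← sq_abs]; nlinarith [sq_nonneg (|f u| - 1), abs_nonneg (f u)]
  nlinarith [Real.exp_pos (-(δ * auxA c u))]

/-- second moment ratio -/
noncomputable def auxR {V : Type*} [Fintype V] (c : V → V → ℝ) (x : V) (f : auxL x → ℝ) : ℝ :=
  (∑' u : auxL x, f u ^ 2 * Real.exp (-auxA c u)) / ∑' u : auxL x, Real.exp (-auxA c u)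

open scoped Classical in
lemma auxR_step {V : Type*} [Fintype V] (c : V → V → ℝ) (x : V)
    (hc : ∀ i, ∃ K : ℝ, 0 ≤ K ∧ ∀ u : V → ℤ, u x = 0 → (u i : ℝ) ^ 2 ≤ K * auxA c u)
    (f : auxL x →+ ℝ) (hf : ∃ K : ℝ, 0 ≤ K ∧ ∀ u : auxL x, f u ^ 2 ≤ K * auxA c u)
    (a b : V) (d : ℝ) (hd : 0 ≤ d) :
    auxR (fun i j => c i j + if (i, j) = (a, b) then d else 0) x f ≤ auxR c x f := by
  have hA : ∀ u : V → ℤ, auxA (fun i j => c i j + if (i, j) = (a, b) then d else 0) u =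
      auxA c u + d / 2 * ((u a : ℝ) - u b) ^ 2 := by
    intro u
    have h : ∑ i : V, ∑ j : V, (if (i, j) = (a, b) then d else 0) * ((u i - u j : ℤ) : ℝ) ^ 2
        = d * ((u a : ℝ) - u b) ^ 2 := by
      rw [← Finset.sum_product', Finset.univ_product_univ, Finset.sum_eq_single (a, b)]
      · simp
      · intro p _ hp
        simp only [Prod.mk.eta, hp, if_false, zero_mul]
      · simp
    simp only [auxA, add_mul, Finset.sum_add_distrib]
    rw [h]
    ring
  let g : auxL x →+ ℝ :=
    { toFun := fun u => ((u : V → ℤ) a : ℝ) - (u : V → ℤ) b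
      map_zero' := by simp
      map_add' := fun u v => by simp; ring }
  have s1 : Summable (fun u : auxL x => Real.exp (-auxA c u)) := by
    simpa using aux_sum1 c x hc 1 one_pos
  have s2 : Summable (fun u : auxL x => f u ^ 2 * Real.exp (-auxA c u)) := by
    simpa using aux_sum2 c x hc f hf 1 one_pos
  have s3 : Summable (fun u : auxL x => f u * Real.exp (-(auxA c u / 2))) := by
    refine (aux_sum3 c x hc f hf (1 / 2) (by norm_num)).congr fun u => ?_
    rw [one_div, inv_mul_eq_div]
  have key := aux_core (L := auxL x) (fun u hu => by
      apply Subtype.ext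
      funext i
      have := congrFun (congrArg Subtype.val hu) i
      simp at this
      simpa using this) (fun u => auxA c u)
    (fun u v => by simpa using auxA_para c u v) f g s1 s2 s3 (d / 2) (by positivity)
  have hexp : ∀ u : auxL x, Real.exp (-auxA (fun i j => c i j + if (i, j) = (a, b) then d else 0) u)
      = Real.exp (-auxA c u) * Real.exp (-(d / 2 * g u ^ 2)) := by
    intro u
    rw [hA, ← Real.exp_add]
    congr 1
    simp only [g, AddMonoidHom.coe_mk, ZeroHom.coe_mk]
    ring
  have s1' : Summable (fun u : auxL x => Real.exp (-auxA c u) * Real.exp (-(d / 2 * g u ^ 2))) := by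
    refine Summable.of_nonneg_of_le (fun u => by positivity) (fun u => ?_) s1
    apply mul_le_of_le_one_right (Real.exp_pos _).le
    apply Real.exp_le_one_iff.mpr
    have : 0 ≤ d / 2 * g u ^ 2 := by positivity
    linarith
  unfold auxR
  simp only [hexp]
  rw [div_le_div_iff₀ (s1'.tsum_pos (fun u => by positivity) 0 (by positivity))
    (s1.tsum_pos (fun u => by positivity) 0 (by positivity))]
  simpa only [mul_assoc] using key

open scoped Classical in
lemma auxR_mono {V : Type*} [Fintype V] (c c' : V → V → ℝ) (x : V)
    (hle : ∀ i j, c' i j ≤ c i j)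
    (hc : ∀ i, ∃ K : ℝ, 0 ≤ K ∧ ∀ u : V → ℤ, u x = 0 → (u i : ℝ) ^ 2 ≤ K * auxA c' u)
    (f : auxL x →+ ℝ) (hf : ∃ K : ℝ, 0 ≤ K ∧ ∀ u : auxL x, f u ^ 2 ≤ K * auxA c' u) :
    auxR c x f ≤ auxR c' x f := by
  have main : ∀ S : Finset (V × V),
      auxR (fun i j => c' i j + if (i, j) ∈ S then c i j - c' i j else 0) x f ≤ auxR c' x f := by
    intro S
    induction S using Finset.induction_on with
    | empty => simp
    | insert p S hp ih =>
      refine le_trans ?_ ih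
      have hm : ∀ u, auxA c' u ≤
          auxA (fun i j => c' i j + if (i, j) ∈ S then c i j - c' i j else 0) u := by
        intro u
        apply auxA_mono
        intro i j
        split_ifs
        · linarith [hle i j]
        · simp
      have := auxR_step (fun i j => c' i j + if (i, j) ∈ S then c i j - c' i j else 0) x
        (fun i => by
          obtain ⟨K, hK, h⟩ := hc i
          exact ⟨K, hK, fun u hu => (h u hu).trans (mul_le_mul_of_nonneg_left (hm u) hK)⟩)
        f (by
          obtain ⟨K, hK, h⟩ := hf
          exact ⟨K, hK, fun u => (h u).trans (mul_le_mul_of_nonneg_left (hm u) hK)⟩)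
        p.1 p.2 (c p.1 p.2 - c' p.1 p.2) (by linarith [hle p.1 p.2])
      refine le_of_eq_of_le ?_ this
      congr 1
      funext i j
      by_cases h : (i, j) = p
      · subst h
        simp [hp]
      · simp [h, Finset.mem_insert]
  simpa using main Finset.univ

lemma aux_rvar {V : Type*} [Fintype V] (c : V → V → ℝ) (x : V)
    (hconn : ∀ v, (supportGraph c).Reachable x v) (F : (V → ℤ) → ℝ)
    (f : auxL x →+ ℝ) (hFf : ∀ u : auxL x, F u = f u) :
    gffRVar c x F = auxR c x f := by
  let e : auxL x ≃ GffConfig c x := Equiv.subtypeEquivRight (fun u => by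
    rw [auxL_mem]
    exact ⟨fun h => ⟨h, fun v hv => absurd (hconn v) hv⟩, fun h => h.1⟩)
  have he : ∀ u, (e u).val = u.val := fun u => rfl
  have hw : ∀ u, gffWeight c u = Real.exp (-auxA c u) := fun u => rfl
  unfold gffRVar auxR gffZ
  rw [← e.tsum_eq (fun φ => F φ.val ^ 2 * gffWeight c φ.val),
    ← e.tsum_eq (fun φ => F φ.val * gffWeight c φ.val),
    ← e.tsum_eq (fun φ => gffWeight c φ.val)]
  simp only [he, hw, hFf]
  have hz : ∑' u : auxL x, f u * Real.exp (-auxA c u) = 0 := by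
    have h := (Equiv.neg (auxL x)).tsum_eq (fun u => f u * Real.exp (-auxA c u))
    have hn : ∀ u : auxL x, f (Equiv.neg (auxL x) u) * Real.exp (-auxA c (Equiv.neg (auxL x) u)) =
        -(f u * Real.exp (-auxA c u)) := by
      intro u
      have : auxA c ((-u : auxL x) : V → ℤ) = auxA c u := by
        unfold auxA
        congr 1
        refine Finset.sum_congr rfl fun i _ => Finset.sum_congr rfl fun j _ => ?_
        simp only [AddSubgroup.coe_neg, Pi.neg_apply]
        push_cast
        ring
      rw [Equiv.neg_apply, this, map_neg]
      ring
    rw [tsum_congr hn, tsum_neg] at h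
    linarith
  rw [hz]
  simp

lemma aux_final {V : Type*} [Fintype V] (x : V) (c c' : V → V → ℝ)
    (hnn' : ∀ i j, 0 ≤ c' i j)
    (hle : ∀ i j, c' i j ≤ c i j)
    (hr : ∀ v, (supportGraph c).Reachable x v) (hr' : ∀ v, (supportGraph c').Reachable x v)
    (F : (V → ℤ) → ℝ) (f : auxL x →+ ℝ) (hFf : ∀ u : auxL x, F u = f u)
    (hf : ∃ K : ℝ, 0 ≤ K ∧ ∀ u : auxL x, f u ^ 2 ≤ K * auxA c' u) :
    gffRVar c x F ≤ gffRVar c' x F := by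
  rw [aux_rvar c x hr F f hFf, aux_rvar c' x hr' F f hFf]
  exact auxR_mono c c' x hle (fun i => aux_coer c' hnn' x i (hr' i)) f hf

end GffAux2

/-- **Monotonicity of the variances in the conductances.**
Let `G = (V,E,x)` be a finite connected rooted graph and let `λ ⪰ λ'` be two collections
of conductances in `(0,∞)^E` (encoded here as symmetric functions `c, c' : V → V → ℝ`
which are positive exactly on the (same) edge set, vanish elsewhere, and satisfy
`c' ≤ c` pointwise, the support graph being connected). Then for every `i ∈ V`
the variance of `φ(i)` is decreasing in the conductances, and likewise for every
`i, j ∈ V` the variance of `φ(i) − φ(j)` is decreasing in the conductances. -/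
theorem gff_variance_monotone_in_conductances
    {V : Type*} [Fintype V] (x : V) (c c' : V → V → ℝ)
    (hsym : ∀ i j, c i j = c j i) (hsym' : ∀ i j, c' i j = c' j i)
    (hnn' : ∀ i j, 0 ≤ c' i j)
    (hle : ∀ i j, c' i j ≤ c i j)
    (hsupp : ∀ i j, 0 < c i j ↔ 0 < c' i j)
    (hconn : (supportGraph c).Connected) :
    (∀ i : V, gffVar1 c x i ≤ gffVar1 c' x i) ∧
      (∀ i j : V, gffVar2 c x i j ≤ gffVar2 c' x i j) := by
  have hG : supportGraph c = supportGraph c' := by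
    unfold supportGraph
    congr 1
    funext a b
    exact propext (hsupp a b)
  have hr : ∀ v, (supportGraph c).Reachable x v := fun v => hconn.preconnected x v
  have hr' : ∀ v, (supportGraph c').Reachable x v := hG ▸ hr
  have hc := fun i => aux_coer c' hnn' x i (hr' i)
  constructor
  · intro i
    unfold gffVar1
    rw [if_pos (hr i), if_pos (hr' i)]
    apply ENNReal.ofReal_le_ofReal
    refine aux_final x c c' hnn' hle hr hr' _
      { toFun := fun u => ((u : V → ℤ) i : ℝ)
        map_zero' := by simp
        map_add' := fun u v => by simp } (fun u => rfl) ?_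
    obtain ⟨K, hK, h⟩ := hc i
    exact ⟨K, hK, fun u => h u ((auxL_mem x _).mp u.2)⟩
  · intro i j
    unfold gffVar2
    rw [if_pos ⟨hr i, hr j⟩, if_pos ⟨hr' i, hr' j⟩]
    apply ENNReal.ofReal_le_ofReal
    refine aux_final x c c' hnn' hle hr hr' _
      { toFun := fun u => ((u : V → ℤ) i : ℝ) - ((u : V → ℤ) j : ℝ)
        map_zero' := by simp
        map_add' := fun u v => by simp; ring } (fun u => rfl) ?_
    obtain ⟨K, hK, h⟩ := hc i
    obtain ⟨M, hM, h'⟩ := hc j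
    refine ⟨2 * K + 2 * M, by positivity, fun u => ?_⟩
    have h1 := h u ((auxL_mem x _).mp u.2)
    have h2 := h' u ((auxL_mem x _).mp u.2)
    simp only [AddMonoidHom.coe_mk, ZeroHom.coe_mk]
    nlinarith [sq_nonneg (((u : V → ℤ) i : ℝ) + ((u : V → ℤ) j : ℝ))]
end

section
/- Let G = (V, E, x) be a finite connected rooted graph with conductances λ ∈ (0,∞)^E, let y, z ∈ V be two vertices, let Ḡ be the graph obtained from G by identifying the vertices y and z, and let λ̄ be the induced collection of conductances on Ḡ. Then for every vertex i ∈ V, Var^{IV-GFF}_{Ḡ,λ̄}[φ(i)] ≤ Var^{IV-GFF}_{G,λ}[φ(i)], and for every pair of vertices i,j ∈ V, Var^{IV-GFF}_{Ḡ,λ̄}[φ(i) − φ(j)] ≤ Var^{IV-GFF}_{G,λ}[φ(i) − φ(j)]. -/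
open scoped ENNReal

/-- The map identifying the vertex `z` with the vertex `y`. -/
def mergeMap {V : Type*} [DecidableEq V] (y z : V) : V → V :=
  fun v => if v = z then y else v

/-- The conductances induced on the graph obtained by identifying `y` and `z`
(parallel edges have their conductances added). -/
noncomputable def mergeCond {V : Type*} [Fintype V] [DecidableEq V]
    (c : V → V → ℝ) (y z : V) : V → V → ℝ :=
  fun a b => ∑ i : V, ∑ j : V, if mergeMap y z i = a ∧ mergeMap y z j = b then c i j else 0

section GffHelpers

lemma gffH_abstract {L : Type*} [AddCommGroup L] (M : AddSubgroup L)
    (h2 : ∀ a b : L, a + a = b + b → a = b) (q : L → ℝ)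
    (hq : ∀ a b, q (a + b) + q (a - b) = 2 * q a + 2 * q b) (l : L →+ ℝ)
    (hs0 : Summable fun a => Real.exp (-q a))
    (hs2 : Summable fun a => l a ^ 2 * Real.exp (-q a))
    (hs1 : Summable fun a => |l a| * Real.exp (-q a / 2)) :
    (∑' m : M, l m ^ 2 * Real.exp (-q m)) * (∑' a : L, Real.exp (-q a)) ≤
      (∑' a : L, l a ^ 2 * Real.exp (-q a)) * (∑' m : M, Real.exp (-q m)) := by
  set g : L → ℝ := fun a => l a * Real.exp (-q a / 2) with hg
  have hgs : Summable fun a => ‖g a‖ := by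
    refine hs1.congr fun a => ?_
    simp [hg]
  have hM0 : Summable fun m : M => Real.exp (-q m) := hs0.subtype _
  have hM2 : Summable fun m : M => l m ^ 2 * Real.exp (-q m) := hs2.subtype _
  -- key sum
  set F : L × M → ℝ := fun p => g p.1 * g (p.1 + (p.2 + p.2 : L)) with hF
  have hFs : Summable F := by
    have hgg : Summable fun p : L × L => g p.1 * g p.2 := summable_mul_of_summable_norm hgs hgs
    have hinj : Function.Injective (fun p : L × M => (p.1, p.1 + (p.2 + p.2 : L))) := by
      rintro ⟨a, m⟩ ⟨b, n⟩ h
      simp only [Prod.mk.injEq] at h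
      obtain ⟨rfl, h⟩ := h
      have := h2 _ _ (add_left_cancel h)
      simp [Subtype.ext_iff, this]
    exact (hgg.comp_injective hinj).congr fun p => rfl
  have hpos : 0 ≤ ∑' p, F p := by
    -- L ≃ Q × M
    let N : AddSubgroup L := M.map (nsmulAddMonoidHom 2)
    let r : (L ⧸ N) × M → L := fun p => p.1.out + (p.2 + p.2 : L)
    have hr : Function.Bijective r := by
      constructor
      · rintro ⟨k, m⟩ ⟨k', m'⟩ h
        simp only [r] at h
        have hk : k = k' := by
          rw [← QuotientAddGroup.out_eq' k, ← QuotientAddGroup.out_eq' k']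
          rw [QuotientAddGroup.eq]
          refine ⟨(m - m' : M), (m - m').2, ?_⟩
          simp only [nsmulAddMonoidHom_apply, AddSubgroup.coe_sub, two_nsmul]
          have : k'.out = k.out + (m + m : L) - (m' + m') := by rw [h]; abel
          rw [this]; abel
        subst hk
        have := h2 _ _ (add_left_cancel h)
        simp [Subtype.ext_iff, this]
      · intro a
        have : ((QuotientAddGroup.mk a : L ⧸ N).out : L ⧸ N) = (a : L ⧸ N) :=
          QuotientAddGroup.out_eq' _
        rw [QuotientAddGroup.eq] at this
        obtain ⟨m, hm, h⟩ := this
        refine ⟨((a : L ⧸ N), ⟨m, hm⟩), ?_⟩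
        simp only [nsmulAddMonoidHom_apply, two_nsmul] at h
        simp only [r]
        rw [h]; abel
    let e : (L ⧸ N) × M ≃ L := Equiv.ofBijective r hr
    have hgs' : Summable g := hgs.of_norm
    have e2 : ∑' p, F p = ∑' p : ((L ⧸ N) × M) × M, F (e p.1, p.2) :=
      ((e.prodCongr (Equiv.refl M)).tsum_eq F).symm
    have hFs2 : Summable fun p : ((L ⧸ N) × M) × M => F (e p.1, p.2) :=
      ((e.prodCongr (Equiv.refl M)).summable_iff (f := F)).mpr hFs
    have hge : Summable fun p : (L ⧸ N) × M => g (e p) := (e.summable_iff (f := g)).mpr hgs'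
    rw [e2, hFs2.tsum_prod]
    have e3 : ∀ p : (L ⧸ N) × M, ∑' m : M, F (e p, m) = g (e p) * ∑' m : M, g (e (p.1, m)) := by
      rintro ⟨k, n⟩
      simp only [hF]
      rw [tsum_mul_left]
      congr 1
      rw [← (Equiv.addLeft n).tsum_eq (fun m : M => g (e (k, m)))]
      refine tsum_congr fun m => ?_
      congr 1
      simp only [e, r, Equiv.ofBijective_apply, Equiv.coe_addLeft, AddSubgroup.coe_add]
      abel
    have hs3 := hFs2.prod
    rw [tsum_congr e3]
    simp_rw [e3] at hs3
    rw [hs3.tsum_prod]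
    refine tsum_nonneg fun k => ?_
    simp only
    rw [tsum_mul_right]
    exact mul_self_nonneg _
  have key : ∑' p, F p = (∑' a : L, l a ^ 2 * Real.exp (-q a)) * (∑' m : M, Real.exp (-q m))
      - (∑' m : M, l m ^ 2 * Real.exp (-q m)) * (∑' a : L, Real.exp (-q a)) := by
    let s : L × M ≃ L × M :=
      { toFun := fun p => (p.1 - p.2, p.2)
        invFun := fun p => (p.1 + p.2, p.2)
        left_inv := fun p => by simp
        right_inv := fun p => by simp }
    rw [← s.tsum_eq F, mul_comm (∑' m : M, l m ^ 2 * Real.exp (-q m))]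
    have p1 : Summable fun p : L × M => (l p.1 ^ 2 * Real.exp (-q p.1)) * Real.exp (-q p.2) :=
      hs2.mul_of_nonneg hM0 (fun a => by positivity) (fun a => by positivity)
    have p2 : Summable fun p : L × M => Real.exp (-q p.1) * (l p.2 ^ 2 * Real.exp (-q p.2)) :=
      hs0.mul_of_nonneg hM2 (fun a => by positivity) (fun a => by positivity)
    rw [hs2.tsum_mul_tsum hM0 p1, hs0.tsum_mul_tsum hM2 p2, ← p1.tsum_sub p2]
    refine tsum_congr ?_
    rintro ⟨a, m⟩
    simp only [s, hF, hg, Equiv.coe_fn_mk]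
    have h1 : a - (m : L) + (m + m) = a + m := by abel
    rw [h1, map_sub, map_add]
    have h3 : Real.exp (-q (a - m) / 2) * Real.exp (-q (a + m) / 2)
        = Real.exp (-q a) * Real.exp (-q m) := by
      rw [← Real.exp_add, ← Real.exp_add]
      congr 1
      have := hq a m
      linarith
    linear_combination (l a - l m) * (l a + l m) * h3
  linarith

lemma gffH_summable_int (δ : ℝ) (hδ : 0 < δ) :
    Summable fun k : ℤ => Real.exp (-(δ * (k : ℝ) ^ 2)) := by
  have h : Summable fun n : ℕ => Real.exp (-(δ * (n : ℝ) ^ 2)) := by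
    have := Real.summable_exp_nat_mul_iff.mpr (show -δ < 0 by linarith)
    refine this.of_nonneg_of_le (fun _ => by positivity) fun n => ?_
    apply Real.exp_le_exp.mpr
    have : (n : ℝ) ≤ (n : ℝ) ^ 2 := by
      exact_mod_cast Nat.le_self_pow (by norm_num) n
    nlinarith
  refine Summable.of_nat_of_neg ?_ ?_
  · simpa using h
  · simpa using h

lemma gffH_summable_fin (f : ℤ → ℝ) (hf : Summable f) (hf0 : ∀ k, 0 ≤ f k) (n : ℕ) :
    Summable fun φ : Fin n → ℤ => ∏ i, f (φ i) := by
  induction n with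
  | zero => exact Summable.of_finite
  | succ n ih =>
    have := hf.mul_of_nonneg ih hf0 (fun φ => Finset.prod_nonneg fun i _ => hf0 _)
    rw [← (Fin.consEquiv (fun _ => ℤ)).summable_iff]
    refine this.congr fun p => ?_
    simp [Fin.prod_univ_succ, Fin.consEquiv]

lemma gffH_summable_pi {V : Type*} [Fintype V] (δ : ℝ) (hδ : 0 < δ) :
    Summable fun φ : V → ℤ => Real.exp (-(δ * ∑ v, (φ v : ℝ) ^ 2)) := by
  have := gffH_summable_fin _ (gffH_summable_int δ hδ) (fun _ => by positivity) (Fintype.card V)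
  let e := Fintype.equivFin V
  rw [← (Equiv.arrowCongr e.symm (Equiv.refl ℤ)).summable_iff]
  refine this.congr fun φ => ?_
  rw [← Real.exp_sum]
  simp only [Function.comp, Equiv.arrowCongr_apply, Equiv.symm_symm, Equiv.coe_refl, id]
  congr 1
  rw [← e.symm.sum_comp]
  simp [Finset.mul_sum]

/-- energy -/
noncomputable def gffH_q {V : Type*} [Fintype V] (c : V → V → ℝ) (φ : V → ℤ) : ℝ :=
  (1 : ℝ) / 2 * ∑ i : V, ∑ j : V, c i j * ((φ i - φ j : ℤ) : ℝ) ^ 2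

lemma gffH_q_nonneg {V : Type*} [Fintype V] (c : V → V → ℝ) (hnn : ∀ i j, 0 ≤ c i j)
    (φ : V → ℤ) : 0 ≤ gffH_q c φ := by
  unfold gffH_q
  have : 0 ≤ ∑ i : V, ∑ j : V, c i j * ((φ i - φ j : ℤ) : ℝ) ^ 2 :=
    Finset.sum_nonneg fun i _ => Finset.sum_nonneg fun j _ =>
      mul_nonneg (hnn i j) (sq_nonneg _)
  linarith

lemma gffH_edge {V : Type*} [Fintype V] (c : V → V → ℝ) (hnn : ∀ i j, 0 ≤ c i j)
    (φ : V → ℤ) (a b : V) : c a b * ((φ a : ℝ) - φ b) ^ 2 ≤ 2 * gffH_q c φ := by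
  have h1 : c a b * ((φ a - φ b : ℤ) : ℝ) ^ 2 ≤ ∑ j : V, c a j * ((φ a - φ j : ℤ) : ℝ) ^ 2 :=
    Finset.single_le_sum (f := fun j => c a j * ((φ a - φ j : ℤ) : ℝ) ^ 2)
      (fun j _ => mul_nonneg (hnn a j) (sq_nonneg _)) (Finset.mem_univ b)
  have h2 : ∑ j : V, c a j * ((φ a - φ j : ℤ) : ℝ) ^ 2 ≤
      ∑ i : V, ∑ j : V, c i j * ((φ i - φ j : ℤ) : ℝ) ^ 2 :=
    Finset.single_le_sum (f := fun i => ∑ j : V, c i j * ((φ i - φ j : ℤ) : ℝ) ^ 2)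
      (fun i _ => Finset.sum_nonneg fun j _ => mul_nonneg (hnn i j) (sq_nonneg _))
      (Finset.mem_univ a)
  unfold gffH_q
  push_cast at *
  linarith

lemma gffH_coercive1 {V : Type*} [Fintype V] (c : V → V → ℝ) (hnn : ∀ i j, 0 ≤ c i j)
    (x v : V) (h : (supportGraph c).Reachable x v) :
    ∃ C : ℝ, 0 ≤ C ∧ ∀ φ : V → ℤ, φ x = 0 → (φ v : ℝ) ^ 2 ≤ C * gffH_q c φ := by
  rw [SimpleGraph.reachable_iff_reflTransGen] at h
  induction h with
  | refl => exact ⟨0, le_rfl, fun φ hφ => by simp [hφ]⟩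
  | @tail a b _ hab ih =>
    obtain ⟨C, hC, ih⟩ := ih
    have hd : ∃ D : ℝ, 0 ≤ D ∧ ∀ φ : V → ℤ, ((φ a : ℝ) - φ b) ^ 2 ≤ D * gffH_q c φ := by
      simp only [supportGraph, SimpleGraph.fromRel_adj] at hab
      rcases hab.2 with h | h
      · refine ⟨2 / c a b, by positivity, fun φ => ?_⟩
        have := gffH_edge c hnn φ a b
        rw [div_mul_eq_mul_div, le_div_iff₀ h]
        linarith
      · refine ⟨2 / c b a, by positivity, fun φ => ?_⟩
        have := gffH_edge c hnn φ b a
        rw [div_mul_eq_mul_div, le_div_iff₀ h]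
        linarith
    obtain ⟨D, hD, hd⟩ := hd
    refine ⟨2 * C + 2 * D, by positivity, fun φ hφ => ?_⟩
    have h1 := ih φ hφ
    have h2 := hd φ
    nlinarith [sq_nonneg (2 * (φ a : ℝ) - φ b)]

lemma gffH_coercive {V : Type*} [Fintype V] (c : V → V → ℝ) (hnn : ∀ i j, 0 ≤ c i j)
    (hconn : (supportGraph c).Connected) (x : V) :
    ∃ C : ℝ, 0 < C ∧ ∀ φ : V → ℤ, φ x = 0 → ∑ v, (φ v : ℝ) ^ 2 ≤ C * gffH_q c φ := by
  choose C hC h using fun v => gffH_coercive1 c hnn x v (hconn.preconnected x v)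
  refine ⟨∑ v, C v + 1, by have := Finset.sum_nonneg fun v (_ : v ∈ Finset.univ) => hC v; linarith,
    fun φ hφ => ?_⟩
  rw [add_mul, Finset.sum_mul]
  have := Finset.sum_le_sum fun v (_ : v ∈ Finset.univ) => h v φ hφ
  have := gffH_q_nonneg c hnn φ
  linarith

/-- fields vanishing at the root -/
def gffH_L {V : Type*} (x : V) : AddSubgroup (V → ℤ) where
  carrier := {φ | φ x = 0}
  zero_mem' := rfl
  add_mem' := fun {a b} ha hb => by simp_all
  neg_mem' := fun {a} ha => by simp_all

/-- fields agreeing at `y` and `z` -/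
def gffH_M {V : Type*} (x y z : V) : AddSubgroup (gffH_L x) where
  carrier := {φ | φ.1 y = φ.1 z}
  zero_mem' := rfl
  add_mem' := fun {a b} ha hb => by simp_all
  neg_mem' := fun {a} ha => by simp_all

lemma gffH_summable {V : Type*} [Fintype V] (c : V → V → ℝ) (hnn : ∀ i j, 0 ≤ c i j)
    (hconn : (supportGraph c).Connected) (x : V) (δ : ℝ) (hδ : 0 < δ) :
    Summable fun φ : gffH_L x => Real.exp (-(δ * gffH_q c φ.1)) := by
  obtain ⟨C, hC, h⟩ := gffH_coercive c hnn hconn x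
  have := (gffH_summable_pi (V := V) (δ / C) (by positivity)).subtype (gffH_L x : Set (V → ℤ))
  refine Summable.of_nonneg_of_le (fun _ => by positivity) (fun φ => ?_) this
  apply Real.exp_le_exp.mpr
  have := h φ.1 φ.2
  simp only [neg_le_neg_iff]
  rw [div_mul_eq_mul_div, div_le_iff₀ hC]
  nlinarith

lemma gffH_main {V : Type*} [Fintype V] (c : V → V → ℝ) (hnn : ∀ i j, 0 ≤ c i j)
    (hconn : (supportGraph c).Connected) (x y z : V) (l : (V → ℤ) →+ ℝ)
    (hl : ∃ K : ℝ, 0 ≤ K ∧ ∀ φ : V → ℤ, l φ ^ 2 ≤ K * ∑ v, (φ v : ℝ) ^ 2) :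
    (∑' m : gffH_M x y z, l m.1.1 ^ 2 * Real.exp (-gffH_q c m.1.1)) /
      (∑' m : gffH_M x y z, Real.exp (-gffH_q c m.1.1)) ≤
    (∑' a : gffH_L x, l a.1 ^ 2 * Real.exp (-gffH_q c a.1)) /
      (∑' a : gffH_L x, Real.exp (-gffH_q c a.1)) := by
  obtain ⟨K, hK, hl⟩ := hl
  obtain ⟨C, hC, hCq⟩ := gffH_coercive c hnn hconn x
  have hlq : ∀ a : gffH_L x, l a.1 ^ 2 ≤ K * C * gffH_q c a.1 := fun a =>
    (hl a.1).trans (by rw [mul_assoc]; exact mul_le_mul_of_nonneg_left (hCq a.1 a.2) hK)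
  have hs0 : Summable fun a : gffH_L x => Real.exp (-gffH_q c a.1) := by
    simpa using gffH_summable c hnn hconn x 1 one_pos
  have hs2 : Summable fun a : gffH_L x => l a.1 ^ 2 * Real.exp (-gffH_q c a.1) := by
    refine Summable.of_nonneg_of_le (fun _ => by positivity) (fun a => ?_)
      ((gffH_summable c hnn hconn x (1 / 2) (by norm_num)).mul_left (2 * (K * C)))
    have h1 := Real.add_one_le_exp (gffH_q c a.1 / 2)
    have h2 : Real.exp (-(1 / 2 * gffH_q c a.1)) =
        Real.exp (gffH_q c a.1 / 2) * Real.exp (-gffH_q c a.1) := by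
      rw [← Real.exp_add]; congr 1; ring
    rw [h2, ← mul_assoc]
    refine mul_le_mul_of_nonneg_right ((hlq a).trans ?_) (by positivity)
    have : 0 ≤ K * C := by positivity
    nlinarith
  have hs1 : Summable fun a : gffH_L x => |l a.1| * Real.exp (-gffH_q c a.1 / 2) := by
    refine Summable.of_nonneg_of_le (fun _ => by positivity) (fun a => ?_)
      ((gffH_summable c hnn hconn x (1 / 4) (by norm_num)).mul_left (4 * (K * C) + 1))
    have h0 := gffH_q_nonneg c hnn a.1
    have h1 := Real.add_one_le_exp (gffH_q c a.1 / 4)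
    have h2 : Real.exp (-(1 / 4 * gffH_q c a.1)) =
        Real.exp (gffH_q c a.1 / 4) * Real.exp (-gffH_q c a.1 / 2) := by
      rw [← Real.exp_add]; congr 1; ring
    rw [h2, ← mul_assoc]
    refine mul_le_mul_of_nonneg_right ?_ (by positivity)
    have h3 : |l a.1| ≤ l a.1 ^ 2 + 1 := by
      rw [← sq_abs]; nlinarith [sq_nonneg (|l a.1| - 1), abs_nonneg (l a.1)]
    have := hlq a
    have : 0 ≤ K * C := by positivity
    nlinarith
  have key := gffH_abstract (gffH_M x y z)
    (fun a b h => by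
      ext v
      have := congrArg (fun f : gffH_L x => f.1 v) h
      simp at this
      omega)
    (fun a : gffH_L x => gffH_q c a.1)
    (fun a b => by
      simp only [gffH_q, Finset.mul_sum, ← Finset.sum_add_distrib]
      refine Finset.sum_congr rfl fun i _ => Finset.sum_congr rfl fun j _ => ?_
      simp
      ring)
    (l.comp (gffH_L x).subtype) hs0 hs2 hs1
  simp only [AddMonoidHom.comp_apply, AddSubgroup.subtype_apply] at key
  have hM0 : Summable fun m : gffH_M x y z => Real.exp (-gffH_q c m.1.1) := hs0.subtype _
  rw [div_le_div_iff₀]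
  · exact key
  · exact hM0.tsum_pos (fun _ => by positivity) 0 (by positivity)
  · exact hs0.tsum_pos (fun _ => by positivity) 0 (by positivity)

lemma gffH_mean {V : Type*} [Fintype V] (c : V → V → ℝ) (x : V) (l : (V → ℤ) →+ ℝ) :
    ∑' a : gffH_L x, l a.1 * Real.exp (-gffH_q c a.1) = 0 := by
  have h := (Equiv.neg (gffH_L x)).tsum_eq (fun a : gffH_L x => l a.1 * Real.exp (-gffH_q c a.1))
  have h2 : ∀ a : gffH_L x, gffH_q c (-a.1) = gffH_q c a.1 := by
    intro a
    unfold gffH_q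
    congr 1
    refine Finset.sum_congr rfl fun i _ => Finset.sum_congr rfl fun j _ => ?_
    simp
    left; ring
  simp only [Equiv.neg_apply, AddSubgroup.coe_neg, map_neg, h2, neg_mul, tsum_neg] at h
  linarith

/-- configurations on the connected graph -/
noncomputable def gffH_eL {V : Type*} (c : V → V → ℝ) (hconn : (supportGraph c).Connected) (x : V) :
    gffH_L x ≃ GffConfig c x where
  toFun φ := ⟨φ.1, φ.2, fun v hv => absurd (hconn.preconnected x v) hv⟩
  invFun φ := ⟨φ.1, φ.2.1⟩
  left_inv _ := rfl
  right_inv _ := rfl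

lemma gffH_mergeCond_nonneg {V : Type*} [Fintype V] [DecidableEq V] (c : V → V → ℝ)
    (hnn : ∀ i j, 0 ≤ c i j) (y z i j : V) :
    c i j ≤ mergeCond c y z (mergeMap y z i) (mergeMap y z j) := by
  unfold mergeCond
  have nn : ∀ a b a' b', 0 ≤ if mergeMap y z a = a' ∧ mergeMap y z b = b' then c a b else 0 := by
    intro a b a' b'; split_ifs; exacts [hnn _ _, le_rfl]
  refine le_trans ?_ (Finset.single_le_sum (fun a _ => Finset.sum_nonneg fun b _ => nn _ _ _ _)
    (Finset.mem_univ i))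
  refine le_trans ?_ (Finset.single_le_sum (fun b _ => nn _ _ _ _) (Finset.mem_univ j))
  simp

lemma gffH_merge_reach {V : Type*} [Fintype V] [DecidableEq V] (c : V → V → ℝ)
    (hnn : ∀ i j, 0 ≤ c i j) (y z x v : V) (h : (supportGraph c).Reachable x v) :
    (supportGraph (mergeCond c y z)).Reachable (mergeMap y z x) (mergeMap y z v) := by
  rw [SimpleGraph.reachable_iff_reflTransGen] at h
  induction h with
  | refl => exact SimpleGraph.Reachable.refl _
  | @tail a b _ hab ih =>
    refine ih.trans ?_
    by_cases he : mergeMap y z a = mergeMap y z b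
    · rw [he]
    · apply SimpleGraph.Adj.reachable
      simp only [supportGraph, SimpleGraph.fromRel_adj] at hab ⊢
      refine ⟨he, hab.2.imp (fun h => ?_) (fun h => ?_)⟩
      · exact h.trans_le (gffH_mergeCond_nonneg c hnn y z a b)
      · exact h.trans_le (gffH_mergeCond_nonneg c hnn y z b a)

lemma gffH_merge_ne {V : Type*} [DecidableEq V] (y z v : V) (hyz : z ≠ y) :
    mergeMap y z v ≠ z := by
  unfold mergeMap; split_ifs with h
  · exact hyz.symm
  · exact h

lemma gffH_merge_unreach {V : Type*} [Fintype V] [DecidableEq V] (c : V → V → ℝ)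
    (y z x : V) (hyz : z ≠ y) :
    ¬ (supportGraph (mergeCond c y z)).Reachable (mergeMap y z x) z := by
  intro h
  rw [SimpleGraph.reachable_iff_reflTransGen] at h
  rcases h.cases_tail with h | ⟨a, _, h⟩
  · exact gffH_merge_ne y z x hyz h.symm
  · simp [supportGraph, mergeCond, gffH_merge_ne y z _ hyz] at h

/-- configurations on the merged graph -/
noncomputable def gffH_eM {V : Type*} [Fintype V] [DecidableEq V] (c : V → V → ℝ)
    (hnn : ∀ i j, 0 ≤ c i j) (hconn : (supportGraph c).Connected) (x y z : V) :
    GffConfig (mergeCond c y z) (mergeMap y z x) ≃ gffH_M x y z where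
  toFun φ := ⟨⟨fun v => φ.1 (mergeMap y z v), φ.2.1⟩, by
    change φ.1 (mergeMap y z y) = φ.1 (mergeMap y z z)
    congr 1
    simp [mergeMap]⟩
  invFun ψ := ⟨fun v => if v = z ∧ z ≠ y then 0 else ψ.1.1 v, by
    have h1 : ψ.1.1 x = 0 := ψ.1.2
    have h2 : ψ.1.1 y = ψ.1.1 z := ψ.2
    constructor
    · by_cases hyz : z = y
      · subst hyz
        simp only [ne_eq, not_true_eq_false, and_false, if_false]
        unfold mergeMap; split_ifs with h
        · exact (congrArg ψ.1.1 h).symm.trans h1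
        · exact h1
      · simp only [gffH_merge_ne y z x hyz, false_and, if_false]
        unfold mergeMap; split_ifs with h
        · exact h2.trans ((congrArg ψ.1.1 h).symm.trans h1)
        · exact h1
    · intro v hv
      by_cases hvz : v = z
      · subst hvz
        by_cases hyz : v = y
        · subst hyz
          exfalso; apply hv
          have := gffH_merge_reach c hnn v v x v (hconn.preconnected x v)
          simpa [mergeMap] using this
        · simp [hyz]
      · exfalso; apply hv
        have := gffH_merge_reach c hnn y z x v (hconn.preconnected x v)
        simpa [mergeMap, hvz] using this⟩
  left_inv φ := by
    apply Subtype.ext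
    funext v
    by_cases hyz : z = y
    · subst hyz
      simp only [ne_eq, not_true_eq_false, and_false, if_false]
      have hm : mergeMap z z v = v := by
        unfold mergeMap; split_ifs with h
        · exact h.symm
        · rfl
      exact congrArg φ.1 hm
    · by_cases hv : v = z
      · subst hv
        simp only [ne_eq, hyz, not_false_eq_true, and_self, if_true]
        exact (φ.2.2 _ (gffH_merge_unreach c y v x hyz)).symm
      · simp [hv, mergeMap]
  right_inv ψ := by
    have h2 : ψ.1.1 y = ψ.1.1 z := ψ.2
    apply Subtype.ext
    apply Subtype.ext
    funext v
    by_cases hv : v = z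
    · subst hv
      by_cases hyz : v = y
      · simp [hyz, mergeMap]
      · have : y ≠ v := fun h => hyz h.symm
        simp [mergeMap, this, h2]
    · simp [hv, mergeMap]

lemma gffH_merge_q {V : Type*} [Fintype V] [DecidableEq V] (c : V → V → ℝ) (y z : V)
    (φ : V → ℤ) :
    gffH_q (mergeCond c y z) φ = gffH_q c (fun v => φ (mergeMap y z v)) := by
  unfold gffH_q mergeCond
  congr 1
  simp only [Finset.sum_mul]
  have : ∀ a b i j : V, (if mergeMap y z i = a ∧ mergeMap y z j = b then c i j else 0) *
      ((φ a - φ b : ℤ) : ℝ) ^ 2 = if mergeMap y z i = a then (if mergeMap y z j = b then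
        c i j * ((φ (mergeMap y z i) - φ (mergeMap y z j) : ℤ) : ℝ) ^ 2 else 0) else 0 := by
    intro a b i j
    by_cases h1 : mergeMap y z i = a
    · by_cases h2 : mergeMap y z j = b
      · simp [h1, h2]
      · simp [h2]
    · simp [h1]
  simp only [this]
  calc _ = ∑ a, ∑ i, ∑ b, ∑ j, (if mergeMap y z i = a then (if mergeMap y z j = b then
        c i j * ((φ (mergeMap y z i) - φ (mergeMap y z j) : ℤ) : ℝ) ^ 2 else 0) else 0) :=
        Finset.sum_congr rfl fun a _ => Finset.sum_comm
    _ = ∑ i, ∑ a, ∑ j, ∑ b, (if mergeMap y z i = a then (if mergeMap y z j = b then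
        c i j * ((φ (mergeMap y z i) - φ (mergeMap y z j) : ℤ) : ℝ) ^ 2 else 0) else 0) := by
        rw [Finset.sum_comm]
        exact Finset.sum_congr rfl fun a _ => Finset.sum_congr rfl fun b _ => Finset.sum_comm
    _ = _ := by
        refine Finset.sum_congr rfl fun i _ => ?_
        rw [Finset.sum_comm]
        refine Finset.sum_congr rfl fun j _ => ?_
        simp

lemma gffH_rvar {V : Type*} [Fintype V] [DecidableEq V] (x : V) (c : V → V → ℝ)
    (hnn : ∀ i j, 0 ≤ c i j) (hconn : (supportGraph c).Connected) (y z : V)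
    (l : (V → ℤ) →+ ℝ)
    (hl : ∃ K : ℝ, 0 ≤ K ∧ ∀ φ : V → ℤ, l φ ^ 2 ≤ K * ∑ v, (φ v : ℝ) ^ 2) :
    gffRVar (mergeCond c y z) (mergeMap y z x) (fun φ => l fun v => φ (mergeMap y z v)) ≤
      gffRVar c x l := by
  have hR : gffRVar c x l = (∑' a : gffH_L x, l a.1 ^ 2 * Real.exp (-gffH_q c a.1)) /
      (∑' a : gffH_L x, Real.exp (-gffH_q c a.1)) := by
    have h0 : ∑' φ : GffConfig c x, l φ.val * gffWeight c φ.val = 0 := by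
      rw [← (gffH_eL c hconn x).tsum_eq]
      exact gffH_mean c x l
    unfold gffRVar gffZ
    rw [h0, ← (gffH_eL c hconn x).tsum_eq,
      ← (gffH_eL c hconn x).tsum_eq (fun φ => gffWeight c φ.val)]
    simp only [zero_div, ne_eq, OfNat.ofNat_ne_zero, not_false_eq_true, zero_pow, sub_zero]
    rfl
  rw [hR]
  refine le_trans ?_ (gffH_main c hnn hconn x y z l hl)
  unfold gffRVar gffZ
  refine (sub_le_self _ (sq_nonneg _)).trans (le_of_eq ?_)
  rw [← (gffH_eM c hnn hconn x y z).tsum_eq,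
    ← (gffH_eM c hnn hconn x y z).tsum_eq (fun m => Real.exp (-gffH_q c m.1.1))]
  have hw : ∀ φ : GffConfig (mergeCond c y z) (mergeMap y z x),
      gffWeight (mergeCond c y z) φ.val =
        Real.exp (-gffH_q c (gffH_eM c hnn hconn x y z φ).1.1) := by
    intro φ
    change Real.exp (-gffH_q (mergeCond c y z) φ.1) = _
    rw [gffH_merge_q]
    rfl
  simp only [hw]
  rfl

end GffHelpers

/-- **Monotonicity under identification of vertices.**
Let `G = (V,E,x)` be a finite connected rooted graph with conductances `c ∈ (0,∞)^E`
(encoded as a symmetric nonnegative function whose support graph is connected), and let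
`y, z ∈ V`. Identifying the vertices `y` and `z` decreases the variance of every height
`φ(i)` and of every height difference `φ(i) − φ(j)`. -/
theorem gff_variance_monotone_vertex_identification
    {V : Type*} [Fintype V] [DecidableEq V] (x : V) (c : V → V → ℝ)
    (hsym : ∀ i j, c i j = c j i) (hnn : ∀ i j, 0 ≤ c i j)
    (hconn : (supportGraph c).Connected)
    (y z : V) :
    (∀ i : V,
        gffVar1 (mergeCond c y z) (mergeMap y z x) (mergeMap y z i) ≤ gffVar1 c x i) ∧
      (∀ i j : V,
        gffVar2 (mergeCond c y z) (mergeMap y z x) (mergeMap y z i) (mergeMap y z j)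
          ≤ gffVar2 c x i j) := by
  have hb : ∀ (φ : V → ℤ) (i : V), (φ i : ℝ) ^ 2 ≤ ∑ v, (φ v : ℝ) ^ 2 := fun φ i =>
    Finset.single_le_sum (f := fun v => (φ v : ℝ) ^ 2) (fun v _ => sq_nonneg _)
      (Finset.mem_univ i)
  constructor
  · intro i
    unfold gffVar1
    rw [if_pos (gffH_merge_reach c hnn y z x i (hconn.preconnected x i)),
      if_pos (hconn.preconnected x i)]
    refine ENNReal.ofReal_le_ofReal ?_
    exact gffH_rvar x c hnn hconn y z
      { toFun := fun φ => (φ i : ℝ), map_zero' := by simp, map_add' := by simp }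
      ⟨1, zero_le_one, fun φ => by simpa using hb φ i⟩
  · intro i j
    unfold gffVar2
    rw [if_pos ⟨gffH_merge_reach c hnn y z x i (hconn.preconnected x i),
      gffH_merge_reach c hnn y z x j (hconn.preconnected x j)⟩,
      if_pos ⟨hconn.preconnected x i, hconn.preconnected x j⟩]
    refine ENNReal.ofReal_le_ofReal ?_
    exact gffH_rvar x c hnn hconn y z
      { toFun := fun φ => (φ i : ℝ) - (φ j : ℝ), map_zero' := by simp,
        map_add' := fun a b => by simp; ring }
      ⟨4, by norm_num, fun φ => by
        change ((φ i : ℝ) - (φ j : ℝ)) ^ 2 ≤ _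
        have h1 := hb φ i
        have h2 := hb φ j
        nlinarith [sq_nonneg ((φ i : ℝ) + (φ j : ℝ))]⟩
end

section
/- Let G = (V, E, x) be a finite connected rooted graph with conductances λ ∈ (0,∞)^E, let θ ∈ (1,∞), and let yz ∈ E be an edge. Let G̃ be the graph obtained from G by adding a new vertex t on the edge yz (i.e., replacing yz by the two edges yt and tz), and let λ̃ be the conductances on G̃ defined by: λ̃ = λ on all edges not incident to t, λ̃_{yt} = θ λ_{yz}, and λ̃_{tz} = (θ/(θ−1)) λ_{yz}. Then for every vertex i ∈ V, Var^{IV-GFF}_{G̃,λ̃}[φ(i)] ≤ Var^{IV-GFF}_{G,λ}[φ(i)], and for every pair of vertices i,j ∈ V, Var^{IV-GFF}_{G̃,λ̃}[φ(i) − φ(j)] ≤ Var^{IV-GFF}_{G,λ}[φ(i) − φ(j)]. -/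
open scoped ENNReal

/-- The conductances on the graph obtained from `(V, c)` by adding a new vertex `t`
(represented by `none : Option V`) in the middle of the edge `yz`: the edge `yz` is
replaced by the edges `yt` and `tz`, with conductances `θ·λ_{yz}` and
`(θ/(θ−1))·λ_{yz}` respectively. -/
noncomputable def addVertexCond {V : Type*} [DecidableEq V]
    (c : V → V → ℝ) (y z : V) (θ : ℝ) : Option V → Option V → ℝ
  | some a, some b => if (a = y ∧ b = z) ∨ (a = z ∧ b = y) then 0 else c a b
  | some a, none => if a = y then θ * c y z else if a = z then θ / (θ - 1) * c y z else 0
  | none, some b => if b = y then θ * c y z else if b = z then θ / (θ - 1) * c y z else 0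
  | none, none => 0


theorem iv_core {A R : Type*} [AddCommGroup A] (ρ : R → A)
    (hρ : Function.Bijective (fun s : R × A => ρ s.1 + (s.2 + s.2)))
    (h2 : ∀ a b : A, a + a = b + b → a = b)
    (Q : A → ℝ) (hQ : ∀ a b, Q (a + b) + Q (a - b) = 2 * Q a + 2 * Q b)
    (W U : A →+ ℝ)
    (s0 : Summable fun a => Real.exp (-Q a))
    (s2 : Summable fun a => W a ^ 2 * Real.exp (-Q a))
    (sF : Summable fun a => |W a| * Real.exp (-(1/2 * Q a))) :
    (∑' a, W a ^ 2 * Real.exp (-Q a) * Real.cos (U a)) * (∑' a, Real.exp (-Q a))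
      ≤ (∑' a, Real.exp (-Q a) * Real.cos (U a)) * (∑' a, W a ^ 2 * Real.exp (-Q a)) := by
  set F : A → ℝ := fun a => W a * Real.sin (U a / 2) * Real.exp (-(1/2 * Q a)) with hF
  have sFF : Summable fun a => ‖F a‖ := by
    refine Summable.of_nonneg_of_le (fun _ => norm_nonneg _) (fun a => ?_) sF
    rw [Real.norm_eq_abs, hF]
    simp only [abs_mul, Real.abs_exp]
    gcongr
    exact mul_le_of_le_one_right (abs_nonneg _) (Real.abs_sin_le_one _)
  have sc0 : Summable fun a => Real.exp (-Q a) * Real.cos (U a) := by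
    refine Summable.of_norm_bounded s0 (fun a => ?_)
    rw [Real.norm_eq_abs, abs_mul, Real.abs_exp]
    exact mul_le_of_le_one_right (Real.exp_pos _).le (Real.abs_cos_le_one _)
  have sc2 : Summable fun a => W a ^ 2 * Real.exp (-Q a) * Real.cos (U a) := by
    refine Summable.of_norm_bounded s2 (fun a => ?_)
    rw [Real.norm_eq_abs, abs_mul, abs_of_nonneg (by positivity : 0 ≤ W a ^ 2 * Real.exp (-Q a))]
    exact mul_le_of_le_one_right (by positivity) (Real.abs_cos_le_one _)
  have p1 := summable_mul_of_summable_norm sc0.norm s2.norm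
  have p2 := summable_mul_of_summable_norm sc2.norm s0.norm
  have p1' : Summable fun z : A × A => Real.exp (-Q z.2) * Real.cos (U z.2) * (W z.1 ^ 2 * Real.exp (-Q z.1)) :=
    (Equiv.prodComm A A).summable_iff.mpr p1
  have p2' : Summable fun z : A × A => W z.2 ^ 2 * Real.exp (-Q z.2) * Real.cos (U z.2) * Real.exp (-Q z.1) :=
    (Equiv.prodComm A A).summable_iff.mpr p2
  have e1 := tsum_mul_tsum_of_summable_norm sc0.norm s2.norm
  have e2 := tsum_mul_tsum_of_summable_norm sc2.norm s0.norm
  have e1' := (Equiv.prodComm A A).tsum_eq (fun z : A × A => Real.exp (-Q z.1) * Real.cos (U z.1) * (W z.2 ^ 2 * Real.exp (-Q z.2)))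
  have e2' := (Equiv.prodComm A A).tsum_eq (fun z : A × A => W z.1 ^ 2 * Real.exp (-Q z.1) * Real.cos (U z.1) * Real.exp (-Q z.2))
  have key : ∀ z : A × A, 2 * (F (z.1 + z.2) * F (z.1 - z.2)) =
      (Real.exp (-Q z.1) * Real.cos (U z.1) * (W z.2 ^ 2 * Real.exp (-Q z.2))
        - W z.1 ^ 2 * Real.exp (-Q z.1) * Real.cos (U z.1) * Real.exp (-Q z.2))
      + (Real.exp (-Q z.2) * Real.cos (U z.2) * (W z.1 ^ 2 * Real.exp (-Q z.1))
        - W z.2 ^ 2 * Real.exp (-Q z.2) * Real.cos (U z.2) * Real.exp (-Q z.1)) := by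
    rintro ⟨a, b⟩
    have hc : Real.cos (U a) - Real.cos (U b)
        = -2 * Real.sin ((U a + U b) / 2) * Real.sin ((U a - U b) / 2) :=
      Real.cos_sub_cos _ _
    have he : Real.exp (-(1/2 * Q (a + b))) * Real.exp (-(1/2 * Q (a - b)))
        = Real.exp (-Q a) * Real.exp (-Q b) := by
      rw [← Real.exp_add, ← Real.exp_add]
      congr 1
      linarith [hQ a b]
    simp only [hF, map_add, map_sub]
    linear_combination (2 * (W a + W b) * (W a - W b) * Real.sin ((U a + U b) / 2) *
      Real.sin ((U a - U b) / 2)) * he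
       + (Real.exp (-Q a) * Real.exp (-Q b) * (W a ^ 2 - W b ^ 2)) * hc
  have hG : Summable fun z : A × A => F (z.1 + z.2) * F (z.1 - z.2) := by
    have := ((p1.sub p2).add (p1'.sub p2')).mul_left (1/2)
    refine this.congr (fun z => ?_)
    have := key z
    linarith
  have hsum : 2 * ∑' z : A × A, F (z.1 + z.2) * F (z.1 - z.2) =
      2 * ((∑' a, Real.exp (-Q a) * Real.cos (U a)) * (∑' a, W a ^ 2 * Real.exp (-Q a))
       - (∑' a, W a ^ 2 * Real.exp (-Q a) * Real.cos (U a)) * (∑' a, Real.exp (-Q a))) := by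
    rw [← tsum_mul_left, tsum_congr key, e1, e2]
    rw [Summable.tsum_add (p1.sub p2) (p1'.sub p2'), p1.tsum_sub p2]
    have := Summable.tsum_sub p1' p2'
    simp only [Equiv.prodComm_apply, Prod.fst_swap, Prod.snd_swap] at e1' e2'
    rw [this, e1', e2']
    ring
  have hpos : 0 ≤ ∑' z : A × A, F (z.1 + z.2) * F (z.1 - z.2) := by
    let e : R × (A × A) → A × A := fun t => (ρ t.1 + t.2.1 + t.2.2, t.2.2 - t.2.1)
    have he : Function.Bijective e := by
      constructor
      · rintro ⟨r, p, q⟩ ⟨r', p', q'⟩ h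
        simp only [e, Prod.mk.injEq] at h
        obtain ⟨ha, hb⟩ := h
        have := @hρ.1 (r, p) (r', p') (by
          have h1 : ρ r + (p + p) = (ρ r + p + q) - (q - p) := by abel
          have h2 : ρ r' + (p' + p') = (ρ r' + p' + q') - (q' - p') := by abel
          simp only [h1, h2, ha, hb])
        simp only [Prod.mk.injEq] at this
        obtain ⟨rfl, rfl⟩ := this
        simpa using ha
      · rintro ⟨a, b⟩
        obtain ⟨⟨r, p⟩, h⟩ := hρ.2 (a - b)
        refine ⟨(r, p, b + p), ?_⟩
        simp only [e, Prod.mk.injEq]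
        constructor
        · have : ρ r + p + (b + p) = (ρ r + (p + p)) + b := by abel
          rw [this]; simp only at h; rw [h]; abel
        · abel
    let E := Equiv.ofBijective e he
    have hG' := E.summable_iff.mpr hG
    rw [← E.tsum_eq]
    have hk : ∀ t : R × (A × A), F ((E t).1 + (E t).2) * F ((E t).1 - (E t).2)
        = F (ρ t.1 + (t.2.1 + t.2.1)) * F (ρ t.1 + (t.2.2 + t.2.2)) := by
      rintro ⟨r, p, q⟩
      have h1 : (E (r, p, q)).1 + (E (r, p, q)).2 = ρ r + (q + q) := by
        simp only [E, e, Equiv.ofBijective_apply]; abel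
      have h2 : (E (r, p, q)).1 - (E (r, p, q)).2 = ρ r + (p + p) := by
        simp only [E, e, Equiv.ofBijective_apply]; abel
      rw [h1, h2, mul_comm]
    rw [tsum_congr hk]
    rw [Summable.tsum_prod (hG'.congr fun t => hk t)]
    refine tsum_nonneg fun r => ?_
    have sr : Summable fun p => ‖F (ρ r + (p + p))‖ :=
      sFF.comp_injective (i := fun p => ρ r + (p + p)) (fun p q h => h2 p q (by simpa using h))
    have := tsum_mul_tsum_of_summable_norm sr sr
    simp only
    rw [← this]
    exact mul_self_nonneg _
  linarith

theorem iv_combine {A K : Type*} (w v : A → ℝ) (C : K → A → ℝ) (b : K → ℝ)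
    (hb : ∀ k, 0 ≤ b k) (sb : Summable b) (hC : ∀ k a, |C k a| ≤ 1)
    (sw : Summable w) (sv : Summable v)
    (h : ∀ k, (∑' a, v a * C k a) * (∑' a, w a) ≤ (∑' a, w a * C k a) * (∑' a, v a)) :
    (∑' a, v a * ∑' k, b k * C k a) * (∑' a, w a)
      ≤ (∑' a, w a * ∑' k, b k * C k a) * (∑' a, v a) := by
  have sum2 : ∀ u : A → ℝ, Summable u → Summable fun z : A × K => u z.1 * (b z.2 * C z.2 z.1) := by
    intro u su
    refine Summable.of_norm_bounded (summable_mul_of_summable_norm su.norm sb.norm).norm (fun z => ?_)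
    rw [← mul_assoc, norm_mul]
    exact mul_le_of_le_one_right (norm_nonneg _) (hC _ _)
  have ex : ∀ u : A → ℝ, Summable u → ∑' a, u a * ∑' k, b k * C k a = ∑' k, b k * ∑' a, u a * C k a := by
    intro u su
    simp_rw [← tsum_mul_left]
    rw [← Summable.tsum_comm (f := fun a k => u a * (b k * C k a)) (sum2 u su)]
    refine tsum_congr fun k => tsum_congr fun a => by ring
  have sk : ∀ u : A → ℝ, Summable u → Summable fun k => b k * ∑' a, u a * C k a := by
    intro u su
    have := ((Equiv.prodComm K A).summable_iff.mpr (sum2 u su)).prod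
    refine this.congr fun k => ?_
    rw [← tsum_mul_left]
    refine tsum_congr fun a => by simp; ring
  rw [ex v sv, ex w sw, ← tsum_mul_right, ← tsum_mul_right]
  refine Summable.tsum_le_tsum (fun k => ?_) ((sk v sv).mul_right _) ((sk w sw).mul_right _)
  rw [mul_assoc, mul_assoc]
  exact mul_le_mul_of_nonneg_left (h k) (hb k)

theorem iv_poisson (a : ℝ) (ha : 0 < a) : ∃ b : ℤ → ℝ, (∀ k, 0 ≤ b k) ∧ Summable b ∧
    ∀ u : ℝ, ∑' t : ℤ, Real.exp (-(a * ((t : ℝ) - u) ^ 2))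
      = ∑' k : ℤ, b k * Real.cos (2 * Real.pi * k * u) := by
  have hpi := Real.pi_pos
  set s : ℝ := Real.pi / a with hs
  have hs0 : 0 < s := by positivity
  have sg : Summable fun k : ℤ => Real.exp (-Real.pi * s * (k:ℝ) ^ 2) := by
    have := (summable_jacobiTheta₂_term_iff 0 (Complex.I * s)).mpr (by simpa using hs0)
    refine (this.norm).congr fun k => ?_
    rw [norm_jacobiTheta₂_term]
    congr 1
    simp
    ring
  refine ⟨fun k => s ^ (1/2 : ℝ) * Real.exp (-Real.pi * s * (k:ℝ) ^ 2), fun k => by positivity,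
    sg.mul_left _, fun u => ?_⟩
  have P := Complex.tsum_exp_neg_quadratic (a := (s : ℂ)) (by simpa using hs0) (Complex.I * u)
  have hre := congrArg Complex.re P
  have L1 : ∀ k : ℤ, Complex.exp (-Real.pi * s * (k:ℂ) ^ 2 + 2 * Real.pi * (Complex.I * u) * k)
     = (Real.exp (-Real.pi * s * (k:ℝ) ^ 2) : ℂ) * Complex.exp (((2 * Real.pi * k * u : ℝ) : ℂ) * Complex.I) := by
    intro k
    rw [Complex.ofReal_exp, ← Complex.exp_add]
    congr 1
    push_cast; ring
  have L2 : ∀ k : ℤ, Complex.exp (-Real.pi / s * ((k:ℂ) + Complex.I * (Complex.I * u)) ^ 2)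
     = (Real.exp (-(a * ((k:ℝ) - u) ^ 2)) : ℂ) := by
    intro k
    rw [Complex.ofReal_exp]
    congr 1
    have : (Real.pi : ℂ) / s = a := by
      rw [hs]; push_cast
      have : (Real.pi : ℂ) ≠ 0 := by exact_mod_cast hpi.ne'
      have : (a : ℂ) ≠ 0 := by exact_mod_cast ha.ne'
      field_simp
    rw [neg_div, this, ← mul_assoc, Complex.I_mul_I]
    push_cast; ring
  have sL : Summable fun k : ℤ => (Real.exp (-Real.pi * s * (k:ℝ) ^ 2) : ℂ) * Complex.exp (((2 * Real.pi * k * u : ℝ) : ℂ) * Complex.I) := by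
    apply Summable.of_norm
    refine sg.congr fun k => ?_
    rw [norm_mul, Complex.norm_exp_ofReal_mul_I, mul_one, Complex.norm_real, Real.norm_eq_abs, Real.abs_exp]
  simp_rw [L1, L2] at hre
  rw [Complex.re_tsum sL, ← Complex.ofReal_tsum] at hre
  have hc : (1 : ℂ) / (s : ℂ) ^ (1 / 2 : ℂ) = ((1 / s ^ (1/2:ℝ) : ℝ) : ℂ) := by
    clear_value s
    rw [Complex.ofReal_div, Complex.ofReal_cpow hs0.le]; simp
  rw [hc, ← Complex.ofReal_mul, Complex.ofReal_re] at hre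
  simp_rw [mul_assoc (s ^ (1/2 : ℝ)), tsum_mul_left]
  have hp : 0 < s ^ (1/2 : ℝ) := by positivity
  have : ∀ k : ℤ, ((Real.exp (-Real.pi * s * (k:ℝ) ^ 2) : ℂ) * Complex.exp (((2 * Real.pi * k * u : ℝ) : ℂ) * Complex.I)).re
      = Real.exp (-Real.pi * s * (k:ℝ) ^ 2) * Real.cos (2 * Real.pi * k * u) := by
    intro k
    rw [Complex.re_ofReal_mul, Complex.exp_ofReal_mul_I_re]
  simp_rw [this] at hre
  rw [hre]
  field_simp

noncomputable def ivE {V : Type*} [Fintype V] (c : V → V → ℝ) (φ : V → ℤ) : ℝ :=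
  (1 : ℝ) / 2 * ∑ i : V, ∑ j : V, c i j * ((φ i - φ j : ℤ) : ℝ) ^ 2

theorem gffWeight_eq_ivE {V : Type*} [Fintype V] (c : V → V → ℝ) (φ : V → ℤ) :
    gffWeight c φ = Real.exp (-ivE c φ) := rfl

def ivA {V : Type*} (x : V) : AddSubgroup (V → ℤ) where
  carrier := {φ | φ x = 0}
  zero_mem' := rfl
  add_mem' := by intro a b ha hb; simp only [Set.mem_ofPred_eq, Pi.add_apply] at *; omega
  neg_mem' := by intro a ha; simp only [Set.mem_ofPred_eq, Pi.neg_apply] at *; omega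

theorem ivE_nonneg {V : Type*} [Fintype V] (c : V → V → ℝ) (hnn : ∀ i j, 0 ≤ c i j) (φ : V → ℤ) :
    0 ≤ ivE c φ := by
  unfold ivE
  have : 0 ≤ ∑ i : V, ∑ j : V, c i j * ((φ i - φ j : ℤ) : ℝ) ^ 2 :=
    Finset.sum_nonneg fun i _ => Finset.sum_nonneg fun j _ => mul_nonneg (hnn i j) (sq_nonneg _)
  positivity

theorem ivE_par {V : Type*} [Fintype V] (c : V → V → ℝ) (φ ψ : V → ℤ) :
    ivE c (φ + ψ) + ivE c (φ - ψ) = 2 * ivE c φ + 2 * ivE c ψ := by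
  unfold ivE
  simp only [Finset.mul_sum, ← Finset.sum_add_distrib]
  refine Finset.sum_congr rfl fun i _ => Finset.sum_congr rfl fun j _ => ?_
  simp only [Pi.add_apply, Pi.sub_apply]
  push_cast
  ring

theorem ivE_neg {V : Type*} [Fintype V] (c : V → V → ℝ) (φ : V → ℤ) :
    ivE c (-φ) = ivE c φ := by
  unfold ivE
  congr 1
  refine Finset.sum_congr rfl fun i _ => Finset.sum_congr rfl fun j _ => ?_
  simp only [Pi.neg_apply]
  push_cast
  ring

theorem ivE_edge {V : Type*} [Fintype V] (c : V → V → ℝ) (hnn : ∀ i j, 0 ≤ c i j)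
    (φ : V → ℤ) (a b : V) : c a b * ((φ a : ℝ) - φ b) ^ 2 ≤ 2 * ivE c φ := by
  have h1 : ∑ j : V, c a j * ((φ a - φ j : ℤ) : ℝ) ^ 2 ≤
      ∑ i : V, ∑ j : V, c i j * ((φ i - φ j : ℤ) : ℝ) ^ 2 :=
    Finset.single_le_sum (f := fun i => ∑ j : V, c i j * ((φ i - φ j : ℤ) : ℝ) ^ 2)
      (fun i _ => Finset.sum_nonneg fun j _ => mul_nonneg (hnn i j) (sq_nonneg _))
      (Finset.mem_univ a)
  have h2 : c a b * ((φ a - φ b : ℤ) : ℝ) ^ 2 ≤ ∑ j : V, c a j * ((φ a - φ j : ℤ) : ℝ) ^ 2 :=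
    Finset.single_le_sum (f := fun j => c a j * ((φ a - φ j : ℤ) : ℝ) ^ 2)
      (fun j _ => mul_nonneg (hnn a j) (sq_nonneg _))
      (Finset.mem_univ b)
  have h3 := h2.trans h1
  push_cast at h3
  unfold ivE
  push_cast
  linarith

theorem iv_coercive1 {V : Type*} [Fintype V] (c : V → V → ℝ) (hnn : ∀ i j, 0 ≤ c i j) (x v : V)
    (h : (supportGraph c).Reachable x v) :
    ∃ C : ℝ, 0 ≤ C ∧ ∀ φ : V → ℤ, φ x = 0 → (φ v : ℝ) ^ 2 ≤ C * ivE c φ := by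
  rw [SimpleGraph.reachable_iff_reflTransGen] at h
  induction h with
  | refl => exact ⟨0, le_rfl, fun φ h => by simp [h]⟩
  | @tail a b _ hab ih =>
    obtain ⟨C, hC, H⟩ := ih
    have hab' : 0 < c a b ∨ 0 < c b a := by
      simp only [supportGraph, SimpleGraph.fromRel_adj] at hab
      exact hab.2
    have : ∃ D : ℝ, 0 ≤ D ∧ ∀ φ : V → ℤ, ((φ a : ℝ) - φ b) ^ 2 ≤ D * ivE c φ := by
      rcases hab' with hp | hp
      · refine ⟨2 / c a b, by positivity, fun φ => ?_⟩
        have := ivE_edge c hnn φ a b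
        rw [div_mul_eq_mul_div, le_div_iff₀ hp]
        linarith
      · refine ⟨2 / c b a, by positivity, fun φ => ?_⟩
        have := ivE_edge c hnn φ b a
        rw [div_mul_eq_mul_div, le_div_iff₀ hp]
        nlinarith
    obtain ⟨D, hD, HD⟩ := this
    refine ⟨2 * C + 2 * D, by positivity, fun φ h => ?_⟩
    have h1 := H φ h
    have h2 := HD φ
    nlinarith [sq_nonneg ((φ a : ℝ) + ((φ a : ℝ) - φ b))]

theorem iv_coercive {V : Type*} [Fintype V] (c : V → V → ℝ) (hnn : ∀ i j, 0 ≤ c i j) (x : V)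
    (h : ∀ v, (supportGraph c).Reachable x v) :
    ∃ C : ℝ, 0 < C ∧ ∀ φ : V → ℤ, φ x = 0 → ∑ v, (φ v : ℝ) ^ 2 ≤ C * ivE c φ := by
  choose C hC H using fun v => iv_coercive1 c hnn x v (h v)
  refine ⟨∑ v, C v + 1, by have := Finset.sum_nonneg fun v (_ : v ∈ Finset.univ) => hC v; linarith,
    fun φ hφ => ?_⟩
  have h1 : ∑ v, (φ v : ℝ) ^ 2 ≤ ∑ v, C v * ivE c φ := Finset.sum_le_sum fun v _ => H v φ hφ
  rw [← Finset.sum_mul] at h1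
  linarith [ivE_nonneg c hnn φ]

theorem iv_summable_gauss {V : Type*} [Fintype V] (ε : ℝ) (hε : 0 < ε) :
    Summable fun φ : V → ℤ => Real.exp (-(ε * ∑ v, (φ v : ℝ) ^ 2)) := by
  classical
  have sg : Summable fun k : ℤ => Real.exp (-(ε * (k:ℝ) ^ 2)) := by
    have hp : 0 < ε / Real.pi := by positivity
    have := (summable_jacobiTheta₂_term_iff 0 (Complex.I * ((ε / Real.pi : ℝ) : ℂ))).mpr (by
      rw [Complex.I_mul_im, Complex.ofReal_re]; exact hp)
    refine (this.norm).congr fun k => ?_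
    rw [norm_jacobiTheta₂_term]
    congr 1
    rw [Complex.I_mul_im, Complex.ofReal_re]
    simp
    field_simp
  refine summable_of_sum_le (c := (∑' k : ℤ, Real.exp (-(ε * (k:ℝ) ^ 2))) ^ Fintype.card V)
    (fun φ => (Real.exp_pos _).le) fun s => ?_
  have hsub : s ⊆ Fintype.piFinset (fun v => s.image fun φ => φ v) := by
    intro φ hφ
    rw [Fintype.mem_piFinset]
    exact fun v => Finset.mem_image_of_mem _ hφ
  refine (Finset.sum_le_sum_of_subset_of_nonneg hsub fun _ _ _ => (Real.exp_pos _).le).trans ?_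
  have : ∀ φ : V → ℤ, Real.exp (-(ε * ∑ v, (φ v : ℝ) ^ 2)) = ∏ v, Real.exp (-(ε * (φ v : ℝ) ^ 2)) := by
    intro φ
    rw [← Real.exp_sum, Finset.mul_sum, Finset.sum_neg_distrib]
  simp_rw [this]
  rw [← Finset.prod_univ_sum (fun v => s.image fun φ => φ v) (fun _ (k : ℤ) => Real.exp (-(ε * (k : ℝ) ^ 2)))]
  rw [← Finset.card_univ, ← Finset.prod_const]
  refine Finset.prod_le_prod (fun v _ => Finset.sum_nonneg fun _ _ => (Real.exp_pos _).le) fun v _ => ?_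
  exact sg.sum_le_tsum _ (fun _ _ => (Real.exp_pos _).le)

theorem iv_summable0 {V : Type*} [Fintype V] (c : V → V → ℝ) (hnn : ∀ i j, 0 ≤ c i j) (x : V)
    (h : ∀ v, (supportGraph c).Reachable x v) (δ : ℝ) (hδ : 0 < δ) :
    Summable fun φ : ivA x => Real.exp (-(δ * ivE c φ)) := by
  obtain ⟨C, hC, H⟩ := iv_coercive c hnn x h
  have := (iv_summable_gauss (V := V) (δ / C) (by positivity)).comp_injective
    (Subtype.val_injective (p := fun φ => φ ∈ ivA x))
  refine Summable.of_nonneg_of_le (fun _ => (Real.exp_pos _).le) (fun φ => ?_) this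
  simp only [Function.comp]
  apply Real.exp_le_exp.mpr
  have := H φ.1 φ.2
  rw [neg_le_neg_iff, div_mul_eq_mul_div, div_le_iff₀ hC]
  nlinarith

theorem iv_summable2 {V : Type*} [Fintype V] (c : V → V → ℝ) (hnn : ∀ i j, 0 ≤ c i j) (x : V)
    (h : ∀ v, (supportGraph c).Reachable x v) (δ : ℝ) (hδ : 0 < δ) (i j : V) :
    Summable fun φ : ivA x => ((φ.1 i : ℝ) - φ.1 j) ^ 2 * Real.exp (-(δ * ivE c φ)) := by
  obtain ⟨C, hC, H⟩ := iv_coercive c hnn x h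
  refine Summable.of_nonneg_of_le (fun _ => by positivity) (fun φ => ?_)
    ((iv_summable0 c hnn x h (δ / 2) (by positivity)).mul_left (4 * C * (2 / δ)))
  have h0 := H φ.1 φ.2
  have h1 : (φ.1 i : ℝ) ^ 2 ≤ ∑ v, (φ.1 v : ℝ) ^ 2 :=
    Finset.single_le_sum (f := fun v => (φ.1 v : ℝ) ^ 2) (fun _ _ => sq_nonneg _) (Finset.mem_univ i)
  have h2 : (φ.1 j : ℝ) ^ 2 ≤ ∑ v, (φ.1 v : ℝ) ^ 2 :=
    Finset.single_le_sum (f := fun v => (φ.1 v : ℝ) ^ 2) (fun _ _ => sq_nonneg _) (Finset.mem_univ j)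
  have h3 : ((φ.1 i : ℝ) - φ.1 j) ^ 2 ≤ 4 * C * ivE c φ := by
    nlinarith [sq_nonneg ((φ.1 i : ℝ) + φ.1 j)]
  have h4 : δ / 2 * ivE c φ ≤ Real.exp (δ / 2 * ivE c φ) := by
    linarith [Real.add_one_le_exp (δ / 2 * ivE c φ)]
  have h5 : ivE c φ ≤ 2 / δ * Real.exp (δ / 2 * ivE c φ) := by
    rw [div_mul_eq_mul_div, le_div_iff₀ hδ]; linarith
  have h6 : Real.exp (-(δ / 2 * ivE c φ)) = Real.exp (δ / 2 * ivE c φ) * Real.exp (-(δ * ivE c φ)) := by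
    rw [← Real.exp_add]; congr 1; ring
  rw [h6, ← mul_assoc]
  refine mul_le_mul_of_nonneg_right ?_ (Real.exp_pos _).le
  calc _ ≤ 4 * C * ivE c φ := h3
    _ ≤ 4 * C * (2 / δ * Real.exp (δ / 2 * ivE c φ)) := by gcongr
    _ = _ := by ring

theorem iv_summable1 {V : Type*} [Fintype V] (c : V → V → ℝ) (hnn : ∀ i j, 0 ≤ c i j) (x : V)
    (h : ∀ v, (supportGraph c).Reachable x v) (δ : ℝ) (hδ : 0 < δ) (i j : V) :
    Summable fun φ : ivA x => |(φ.1 i : ℝ) - φ.1 j| * Real.exp (-(δ * ivE c φ)) := by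
  refine Summable.of_nonneg_of_le (fun _ => by positivity) (fun φ => ?_)
    ((iv_summable0 c hnn x h δ hδ).add (iv_summable2 c hnn x h δ hδ i j))
  rw [← one_add_mul]
  refine mul_le_mul_of_nonneg_right ?_ (Real.exp_pos _).le
  rw [← sq_abs]
  nlinarith [sq_nonneg (|(φ.1 i : ℝ) - φ.1 j| - 1)]

def ivEquiv {V : Type*} (c : V → V → ℝ) (x : V) (h : ∀ v, (supportGraph c).Reachable x v) :
    ivA x ≃ GffConfig c x where
  toFun φ := ⟨φ.1, φ.2, fun v hv => absurd (h v) hv⟩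
  invFun φ := ⟨φ.1, φ.2.1⟩
  left_inv _ := rfl
  right_inv _ := rfl

theorem iv_rvar {V : Type*} [Fintype V] (c : V → V → ℝ) (x : V)
    (h : ∀ v, (supportGraph c).Reachable x v) (i j : V) :
    gffRVar c x (fun φ => ((φ i : ℤ) : ℝ) - ((φ j : ℤ) : ℝ)) =
      (∑' φ : ivA x, ((φ.1 i : ℝ) - φ.1 j) ^ 2 * Real.exp (-ivE c φ)) /
        ∑' φ : ivA x, Real.exp (-ivE c φ) := by
  have h0 : ∑' φ : GffConfig c x, ((φ.val i : ℝ) - φ.val j) * gffWeight c φ.val = 0 := by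
    rw [← (ivEquiv c x h).tsum_eq]
    have e := (Equiv.neg (ivA x)).tsum_eq (fun φ : ivA x => ((φ.1 i : ℝ) - φ.1 j) * Real.exp (-ivE c φ))
    have : ∀ φ : ivA x, (((Equiv.neg (ivA x) φ).1 i : ℝ) - (Equiv.neg (ivA x) φ).1 j) * Real.exp (-ivE c (Equiv.neg (ivA x) φ).1)
        = -(((φ.1 i : ℝ) - φ.1 j) * Real.exp (-ivE c φ)) := by
      intro φ
      have hn : (Equiv.neg (ivA x) φ).1 = -φ.1 := rfl
      rw [hn, ivE_neg]
      simp only [Pi.neg_apply]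
      push_cast
      ring
    rw [tsum_congr this, tsum_neg] at e
    change ∑' φ : ivA x, ((φ.1 i : ℝ) - φ.1 j) * Real.exp (-ivE c φ) = 0
    linarith
  unfold gffRVar
  simp only [h0]
  unfold gffZ
  rw [← (ivEquiv c x h).tsum_eq, ← (ivEquiv c x h).tsum_eq]
  simp only [zero_div, ne_eq, OfNat.ofNat_ne_zero, not_false_eq_true, zero_pow, sub_zero]
  rfl

theorem iv_rvar1 {V : Type*} [Fintype V] (c : V → V → ℝ) (x : V) (i : V) :
    gffRVar c x (fun φ => ((φ i : ℤ) : ℝ)) =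
    gffRVar c x (fun φ => ((φ i : ℤ) : ℝ) - ((φ x : ℤ) : ℝ)) := by
  unfold gffRVar
  have : ∀ φ : GffConfig c x, ((φ.val x : ℤ) : ℝ) = 0 := fun φ => by rw [φ.2.1]; simp
  simp only [this, sub_zero]

theorem iv_bij {V : Type*} (x : V) :
    Function.Bijective (fun s : {r : ivA x // ∀ v, r.1 v = 0 ∨ r.1 v = 1} × ivA x =>
      s.1.1 + (s.2 + s.2)) := by
  constructor
  · rintro ⟨⟨⟨r, hr⟩, hr'⟩, ⟨p, hp⟩⟩ ⟨⟨⟨s, hs⟩, hs'⟩, ⟨q, hq⟩⟩ h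
    have h' : ∀ v, r v + (p v + p v) = s v + (q v + q v) := fun v => congrFun (congrArg Subtype.val h) v
    simp only at hr' hs'
    have h1 : r = s := by
      funext v; have := h' v; have := hr' v; have := hs' v; omega
    have h2 : p = q := by
      funext v; have := h' v; have := hr' v; have := hs' v; omega
    subst h1; subst h2; rfl
  · rintro ⟨a, ha⟩
    have ha' : a x = 0 := ha
    refine ⟨⟨⟨⟨fun v => a v % 2, ?_⟩, fun v => ?_⟩, ⟨fun v => a v / 2, ?_⟩⟩, ?_⟩
    · change a x % 2 = 0; omega
    · simp only; omega
    · change a x / 2 = 0; omega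
    · apply Subtype.ext
      funext v
      change a v % 2 + (a v / 2 + a v / 2) = a v
      omega

theorem iv_main {V : Type*} [Fintype V] (c : V → V → ℝ) (hnn : ∀ i j, 0 ≤ c i j) (x : V)
    (h : ∀ v, (supportGraph c).Reachable x v) (i j : V) (U : ivA x →+ ℝ) (a : ℝ) (ha : 0 < a) :
    (∑' φ : ivA x, (((φ.1 i : ℝ) - φ.1 j) ^ 2 * Real.exp (-ivE c φ)) *
        ∑' t : ℤ, Real.exp (-(a * ((t : ℝ) - U φ) ^ 2))) * (∑' φ : ivA x, Real.exp (-ivE c φ))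
    ≤ (∑' φ : ivA x, Real.exp (-ivE c φ) * ∑' t : ℤ, Real.exp (-(a * ((t : ℝ) - U φ) ^ 2))) *
      (∑' φ : ivA x, ((φ.1 i : ℝ) - φ.1 j) ^ 2 * Real.exp (-ivE c φ)) := by
  obtain ⟨b, hb, sb, hh⟩ := iv_poisson a ha
  simp_rw [hh]
  have s0 : Summable fun φ : ivA x => Real.exp (-ivE c φ) := by
    simpa using iv_summable0 c hnn x h 1 one_pos
  have s2 : Summable fun φ : ivA x => ((φ.1 i : ℝ) - φ.1 j) ^ 2 * Real.exp (-ivE c φ) := by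
    simpa using iv_summable2 c hnn x h 1 one_pos i j
  let W : ivA x →+ ℝ :=
    { toFun := fun φ => (φ.1 i : ℝ) - φ.1 j
      map_zero' := by simp
      map_add' := by intro p q; simp only [AddSubgroup.coe_add, Pi.add_apply]; push_cast; ring }
  refine iv_combine (fun φ : ivA x => Real.exp (-ivE c φ)) _
    (fun (k : ℤ) φ => Real.cos (2 * Real.pi * k * U φ)) b hb sb
    (fun _ _ => Real.abs_cos_le_one _) s0 s2 fun k => ?_
  exact iv_core (fun r : {r : ivA x // ∀ v, r.1 v = 0 ∨ r.1 v = 1} => r.1) (iv_bij x)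
    (by
      intro p q hpq
      apply Subtype.ext
      funext v
      have : p.1 v + p.1 v = q.1 v + q.1 v := congrFun (congrArg Subtype.val hpq) v
      omega)
    (fun φ => ivE c φ) (fun p q => ivE_par c p q) W ((AddMonoidHom.mulLeft (2 * Real.pi * k)).comp U)
    s0 s2 (iv_summable1 c hnn x h (1/2) (by norm_num) i j)

theorem iv_cond_nonneg {V : Type*} [DecidableEq V] (c : V → V → ℝ) (hnn : ∀ i j, 0 ≤ c i j)
    (y z : V) (θ : ℝ) (hθ : 1 < θ) : ∀ i j, 0 ≤ addVertexCond c y z θ i j := by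
  have h1 : 0 ≤ θ * c y z := mul_nonneg (by linarith) (hnn _ _)
  have h2 : 0 ≤ θ / (θ - 1) * c y z :=
    mul_nonneg (div_nonneg (by linarith) (by linarith)) (hnn _ _)
  rintro (_ | i) (_ | j) <;> simp only [addVertexCond]
  · exact le_rfl
  · split_ifs <;> first | assumption | exact le_rfl
  · split_ifs <;> first | assumption | exact le_rfl
  · split_ifs
    · exact le_rfl
    · exact hnn _ _

theorem iv_reach {V : Type*} [DecidableEq V] (c : V → V → ℝ)
    (x y z : V) (hyz : y ≠ z) (hedge : 0 < c y z) (θ : ℝ) (hθ : 1 < θ)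
    (h : ∀ v, (supportGraph c).Reachable x v) :
    ∀ v, (supportGraph (addVertexCond c y z θ)).Reachable (some x) v := by
  have hy : (supportGraph (addVertexCond c y z θ)).Adj (some y) none := by
    simp only [supportGraph, SimpleGraph.fromRel_adj]
    refine ⟨by simp, Or.inl ?_⟩
    simp only [addVertexCond, if_true]
    exact mul_pos (by linarith) hedge
  have hz : (supportGraph (addVertexCond c y z θ)).Adj none (some z) := by
    simp only [supportGraph, SimpleGraph.fromRel_adj]
    refine ⟨by simp, Or.inl ?_⟩
    simp only [addVertexCond, if_true, if_neg hyz.symm]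
    exact mul_pos (div_pos (by linarith) (by linarith)) hedge
  have hs : ∀ v, (supportGraph (addVertexCond c y z θ)).Reachable (some x) (some v) := by
    intro v
    have := h v
    rw [SimpleGraph.reachable_iff_reflTransGen] at this
    induction this with
    | refl => exact SimpleGraph.Reachable.refl _
    | @tail a b _ hab ih =>
      refine ih.trans ?_
      by_cases h1 : a = y ∧ b = z
      · rw [h1.1, h1.2]; exact hy.reachable.trans hz.reachable
      by_cases h2 : a = z ∧ b = y
      · rw [h2.1, h2.2]; exact (hy.reachable.trans hz.reachable).symm
      apply SimpleGraph.Adj.reachable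
      simp only [supportGraph, SimpleGraph.fromRel_adj] at hab ⊢
      refine ⟨by simpa using hab.1, ?_⟩
      simp only [addVertexCond]
      rw [if_neg (by tauto), if_neg (by tauto)]
      exact hab.2
  rintro (_ | v)
  · exact (hs y).trans hy.reachable
  · exact hs v

theorem iv_energy {V : Type*} [Fintype V] [DecidableEq V] (c : V → V → ℝ)
    (hsym : ∀ i j, c i j = c j i)
    (y z : V) (hyz : y ≠ z) (θ : ℝ) (hθ : 1 < θ) (φ : Option V → ℤ) :
    ivE (addVertexCond c y z θ) φ = ivE c (fun v => φ (some v)) +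
      c y z * θ ^ 2 / (θ - 1) * ((φ none : ℝ) -
        ((φ (some y) : ℝ) + ((φ (some z) : ℝ) - φ (some y)) / θ)) ^ 2 := by
  have hθ1 : θ - 1 ≠ 0 := by linarith
  have hθ0 : θ ≠ 0 := by linarith
  unfold ivE
  simp only [Fintype.sum_option, addVertexCond]
  have e1 : ∀ a b : V, (if (a = y ∧ b = z) ∨ (a = z ∧ b = y) then 0 else c a b) *
      ((φ (some a) - φ (some b) : ℤ) : ℝ) ^ 2 = c a b * ((φ (some a) - φ (some b) : ℤ) : ℝ) ^ 2
        - (if a = y then if b = z then c y z * ((φ (some y) - φ (some z) : ℤ) : ℝ) ^ 2 else 0 else 0)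
        - (if a = z then if b = y then c z y * ((φ (some z) - φ (some y) : ℤ) : ℝ) ^ 2 else 0 else 0) := by
    intro a b
    by_cases h1 : a = y
    · subst h1
      by_cases h2 : b = z
      · subst h2; simp [hyz]
      · simp [h2, hyz]
    · by_cases h3 : a = z
      · subst h3
        by_cases h4 : b = y
        · subst h4; simp [h1]
        · simp [h4, h1]
      · simp [h1, h3]
  have e2 : ∀ b : V, (if b = y then θ * c y z else if b = z then θ / (θ - 1) * c y z else 0) *
      ((φ none - φ (some b) : ℤ) : ℝ) ^ 2 =
      (if b = y then θ * c y z * ((φ none - φ (some y) : ℤ) : ℝ) ^ 2 else 0)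
      + (if b = z then θ / (θ - 1) * c y z * ((φ none - φ (some z) : ℤ) : ℝ) ^ 2 else 0) := by
    intro b
    by_cases h1 : b = y
    · subst h1; simp [hyz]
    · by_cases h3 : b = z
      · subst h3; simp [h1]
      · simp [h1, h3]
  have e3 : ∀ b : V, (if b = y then θ * c y z else if b = z then θ / (θ - 1) * c y z else 0) *
      ((φ (some b) - φ none : ℤ) : ℝ) ^ 2 =
      (if b = y then θ * c y z * ((φ none - φ (some y) : ℤ) : ℝ) ^ 2 else 0)
      + (if b = z then θ / (θ - 1) * c y z * ((φ none - φ (some z) : ℤ) : ℝ) ^ 2 else 0) := by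
    intro b
    rw [← e2]; push_cast; ring
  simp only [e1, e2, e3, Finset.sum_add_distrib, Finset.sum_sub_distrib, Finset.sum_ite_eq',
    Finset.mem_univ, if_true]
  have e4 : ∀ (w : V) (r : ℝ) (u : V), ∑ a : V, ∑ b : V, (if a = w then if b = u then r else 0 else 0) = r := by
    intro w r u
    rw [Finset.sum_eq_single w (fun a _ ha => by simp [ha]) (by simp)]
    simp
  rw [e4, e4, hsym z y]
  push_cast
  field_simp
  ring

def ivSplit {V : Type*} (x : V) : ivA x × ℤ ≃ ivA (some x : Option V) where
  toFun p := ⟨fun o => o.elim p.2 p.1.1, p.1.2⟩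
  invFun φ := (⟨fun v => φ.1 (some v), φ.2⟩, φ.1 none)
  left_inv _ := rfl
  right_inv φ := by
    apply Subtype.ext
    funext o
    cases o <;> rfl

theorem iv_final {V : Type*} [Fintype V] [DecidableEq V] (x : V) (c : V → V → ℝ)
    (hsym : ∀ i j, c i j = c j i) (hnn : ∀ i j, 0 ≤ c i j)
    (h : ∀ v, (supportGraph c).Reachable x v)
    (y z : V) (hyz : y ≠ z) (hedge : 0 < c y z)
    (θ : ℝ) (hθ : 1 < θ) (i j : V) :
    gffRVar (addVertexCond c y z θ) (some x)
        (fun φ => ((φ (some i) : ℤ) : ℝ) - ((φ (some j) : ℤ) : ℝ))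
      ≤ gffRVar c x (fun φ => ((φ i : ℤ) : ℝ) - ((φ j : ℤ) : ℝ)) := by
  have h' := iv_reach c x y z hyz hedge θ hθ h
  have hnn' := iv_cond_nonneg c hnn y z θ hθ
  rw [iv_rvar _ _ h', iv_rvar _ _ h]
  have t0 : Summable fun φ : ivA (some x) => Real.exp (-ivE (addVertexCond c y z θ) φ) := by
    simpa using iv_summable0 _ hnn' (some x) h' 1 one_pos
  have t2 : Summable fun φ : ivA (some x) => ((φ.1 (some i) : ℝ) - φ.1 (some j)) ^ 2 *
      Real.exp (-ivE (addVertexCond c y z θ) φ) := by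
    simpa using iv_summable2 _ hnn' (some x) h' 1 one_pos (some i) (some j)
  have s0 : Summable fun φ : ivA x => Real.exp (-ivE c φ) := by
    simpa using iv_summable0 c hnn x h 1 one_pos
  rw [div_le_div_iff₀ (t0.tsum_pos (fun _ => (Real.exp_pos _).le) 0 (Real.exp_pos _))
    (s0.tsum_pos (fun _ => (Real.exp_pos _).le) 0 (Real.exp_pos _))]
  let U : ivA x →+ ℝ :=
    { toFun := fun φ => (φ.1 y : ℝ) + ((φ.1 z : ℝ) - φ.1 y) / θ
      map_zero' := by simp
      map_add' := by intro p q; simp only [AddSubgroup.coe_add, Pi.add_apply]; push_cast; ring }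
  have ha : 0 < c y z * θ ^ 2 / (θ - 1) :=
    div_pos (by positivity) (by linarith)
  have M := iv_main c hnn x h i j U _ ha
  have hE : ∀ p : ivA x × ℤ, Real.exp (-ivE (addVertexCond c y z θ) (ivSplit x p).1)
      = Real.exp (-ivE c p.1) * Real.exp (-(c y z * θ ^ 2 / (θ - 1) * ((p.2 : ℝ) - U p.1) ^ 2)) := by
    intro p
    rw [iv_energy c hsym y z hyz θ hθ, neg_add, Real.exp_add]
    rfl
  have t0' := (ivSplit x).summable_iff.mpr t0
  have t2' := (ivSplit x).summable_iff.mpr t2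
  rw [← (ivSplit x).tsum_eq, ← (ivSplit x).tsum_eq (fun φ : ivA (some x) => Real.exp (-ivE (addVertexCond c y z θ) φ))]
  have E0 : ∑' p, Real.exp (-ivE (addVertexCond c y z θ) (ivSplit x p).1) =
      ∑' φ : ivA x, Real.exp (-ivE c φ) * ∑' t : ℤ, Real.exp (-(c y z * θ ^ 2 / (θ - 1) * ((t : ℝ) - U φ) ^ 2)) := by
    refine (Summable.tsum_prod t0').trans ?_
    refine tsum_congr fun φ => ?_
    simp only [Function.comp]
    rw [← tsum_mul_left]
    exact tsum_congr fun t => hE (φ, t)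
  have E2 : ∑' p, (((ivSplit x p).1 (some i) : ℝ) - (ivSplit x p).1 (some j)) ^ 2 *
        Real.exp (-ivE (addVertexCond c y z θ) (ivSplit x p).1) =
      ∑' φ : ivA x, (((φ.1 i : ℝ) - φ.1 j) ^ 2 * Real.exp (-ivE c φ)) *
        ∑' t : ℤ, Real.exp (-(c y z * θ ^ 2 / (θ - 1) * ((t : ℝ) - U φ) ^ 2)) := by
    refine (Summable.tsum_prod t2').trans ?_
    refine tsum_congr fun φ => ?_
    simp only [Function.comp]
    rw [← tsum_mul_left]
    refine tsum_congr fun t => ?_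
    rw [hE (φ, t), mul_assoc]
    rfl
  rw [E0, E2, mul_comm (∑' φ : ivA x, ((φ.1 i : ℝ) - φ.1 j) ^ 2 * Real.exp (-ivE c φ))]
  exact M

/-- **Monotonicity under addition of a vertex.**
Let `G = (V,E,x)` be a finite connected rooted graph with conductances `c ∈ (0,∞)^E`
(encoded as a symmetric nonnegative function whose support graph is connected), let
`θ ∈ (1,∞)` and let `yz ∈ E` be an edge. Adding a new vertex `t` on the edge `yz`,
with conductances `λ̃_{yt} = θ λ_{yz}` and `λ̃_{tz} = (θ/(θ−1)) λ_{yz}`, decreases the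
variance of every height `φ(i)`, `i ∈ V`, and of every height difference
`φ(i) − φ(j)`, `i, j ∈ V`. -/
theorem gff_variance_monotone_vertex_addition
    {V : Type*} [Fintype V] [DecidableEq V] (x : V) (c : V → V → ℝ)
    (hsym : ∀ i j, c i j = c j i) (hnn : ∀ i j, 0 ≤ c i j)
    (hconn : (supportGraph c).Connected)
    (y z : V) (hyz : y ≠ z) (hedge : 0 < c y z)
    (θ : ℝ) (hθ : 1 < θ) :
    (∀ i : V,
        gffVar1 (addVertexCond c y z θ) (some x) (some i) ≤ gffVar1 c x i) ∧
      (∀ i j : V,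
        gffVar2 (addVertexCond c y z θ) (some x) (some i) (some j)
          ≤ gffVar2 c x i j) := by
  have h : ∀ v, (supportGraph c).Reachable x v := fun v => hconn.preconnected x v
  have h' := iv_reach c x y z hyz hedge θ hθ h
  constructor
  · intro i
    unfold gffVar1
    rw [if_pos (h' _), if_pos (h _)]
    apply ENNReal.ofReal_le_ofReal
    rw [iv_rvar1, iv_rvar1 c]
    exact iv_final x c hsym hnn h y z hyz hedge θ hθ i x
  · intro i j
    unfold gffVar2
    rw [if_pos ⟨h' _, h' _⟩, if_pos ⟨h _, h _⟩]
    exact ENNReal.ofReal_le_ofReal (iv_final x c hsym hnn h y z hyz hedge θ hθ i j)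
end
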